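/- arXiv:2308.11121 — 3 statements merged into one kernel-verified Lean document; each statement's English description precedes it below -/
import Mathlib

section
/- Let n ≥ 1, R > 0, ρ ∈ (0,1], and let ω ⊆ B_R be a Lebesgue measurable set with |ω| > 0, where B_r denotes the open ball of radius r centered at the origin in ℝⁿ. Then there exist constants C > 0 and θ ∈ (0,1) such that for every M > 0 and every real-analytic function ξ : B_{2R} → ℝ satisfying |∂^a ξ(x)| ≤ M · (ρR)^{−|a|} · |a|! for all x ∈ B_{2R} and all multi-indices a ∈ ℕⁿ, one has sup_{x ∈ B_R} |ξ(x)| ≤ C · M^{1−θ} · ( ∫_{ω} |ξ(x)| dx )^{θ}. -/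
open MeasureTheory Metric

lemma sep_points (s : ℝ) (hs : 0 < s) (k : ℕ) : ∀ E : Set ℝ, BddBelow E →
    ENNReal.ofReal (2 * k * s) < volume E →
    ∃ x : ℕ → ℝ, (∀ i ≤ k, x i ∈ E) ∧ ∀ i < k, x i + s ≤ x (i+1) := by
  induction k with
  | zero =>
    intro E _ h
    have : E.Nonempty := by
      by_contra hne
      rw [Set.not_nonempty_iff_eq_empty] at hne
      simp [hne] at h
    obtain ⟨y, hy⟩ := this
    exact ⟨fun _ => y, fun _ _ => hy, by simp⟩
  | succ k ih =>
    intro E hb h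
    have hne : E.Nonempty := by
      by_contra hne
      rw [Set.not_nonempty_iff_eq_empty] at hne
      simp [hne] at h
    obtain ⟨y, hy, hys⟩ := exists_lt_of_csInf_lt hne (show sInf E < sInf E + s by linarith)
    have hsub : E ⊆ Set.Icc (sInf E) (sInf E + 2 * s) ∪ (E ∩ Set.Ici (y + s)) := by
      intro z hz
      by_cases hzy : y + s ≤ z
      · exact Or.inr ⟨hz, hzy⟩
      · left
        exact ⟨csInf_le hb hz, by linarith⟩
    have h1 : volume E ≤ ENNReal.ofReal (2 * s) + volume (E ∩ Set.Ici (y + s)) := by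
      refine (measure_mono hsub).trans ((measure_union_le _ _).trans ?_)
      gcongr
      rw [Real.volume_Icc]
      simp
    have h2 : ENNReal.ofReal (2 * k * s) < volume (E ∩ Set.Ici (y + s)) := by
      have := h.trans_le h1
      have e : (2 * ((k+1 : ℕ):ℝ) * s) = 2 * s + 2 * k * s := by push_cast; ring
      rw [e, ENNReal.ofReal_add (by positivity) (by positivity)] at this
      exact (ENNReal.add_lt_add_iff_left ENNReal.ofReal_ne_top).1 this
    obtain ⟨x, hx, hx'⟩ := ih _ (hb.mono Set.inter_subset_left) h2
    refine ⟨fun i => Nat.casesOn i y x, ?_, ?_⟩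
    · intro i hi
      cases i with
      | zero => exact hy
      | succ i => exact (hx i (by omega)).1
    · intro i hi
      cases i with
      | zero => exact (hx 0 (by omega)).2
      | succ i => exact hx' i (by omega)

lemma sep_points_diff (s : ℝ) (k : ℕ) (x : ℕ → ℝ) (hx : ∀ i < k, x i + s ≤ x (i+1))
    (i d : ℕ) (h : i + d ≤ k) : x i + d * s ≤ x (i + d) := by
  induction d with
  | zero => simp
  | succ d ih =>
    have := ih (by omega)
    have := hx (i + d) (by omega)
    push_cast
    rw [← add_assoc]
    linarith

lemma prod_abs_sub (k j : ℕ) (hj : j ≤ k) :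
    ∏ i ∈ (Finset.range (k+1)).erase j, |(j:ℝ) - i| = (j.factorial : ℝ) * ((k - j).factorial : ℝ) := by
  obtain ⟨d, rfl⟩ := Nat.exists_eq_add_of_le hj
  have e : (Finset.range (j+d+1)).erase j = Finset.range j ∪ (Finset.range d).image (fun i => j + 1 + i) := by
    ext i
    simp only [Finset.mem_erase, Finset.mem_range, Finset.mem_union, Finset.mem_image]
    constructor
    · rintro ⟨h1, h2⟩
      by_cases h : i < j
      · exact Or.inl h
      · exact Or.inr ⟨i - (j+1), by omega, by omega⟩
    · rintro (h | ⟨a, h, rfl⟩) <;> omega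
  rw [e, Finset.prod_union, Finset.prod_image]
  · congr 1
    · rw [← Finset.prod_range_reflect, ← Finset.prod_range_add_one_eq_factorial]
      push_cast
      refine Finset.prod_congr rfl fun i hi => ?_
      have hi := Finset.mem_range.1 hi
      have : ((j - 1 - i : ℕ):ℝ) = j - 1 - i := by
        rw [Nat.cast_sub (by omega), Nat.cast_sub (by omega)]; simp
      rw [this, abs_of_nonneg] <;> nlinarith [Nat.cast_nonneg (α := ℝ) i]
    · rw [show j + d - j = d by omega, ← Finset.prod_range_add_one_eq_factorial]
      push_cast
      refine Finset.prod_congr rfl fun i hi => ?_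
      rw [abs_sub_comm, abs_of_nonneg] <;> nlinarith [Nat.cast_nonneg (α := ℝ) i]
  · intro a _ b _ h
    simpa using h
  · rw [Finset.disjoint_left]
    intro a ha hb
    simp at ha hb
    omega

lemma poly_bound (P : Polynomial ℝ) (k : ℕ) (hP : P.natDegree ≤ k) (s : ℝ) (hs : 0 < s) (x : ℕ → ℝ)
    (hx : ∀ i < k, x i + s ≤ x (i+1)) (a δ η y : ℝ) (hδ : 0 < δ)
    (hxJ : ∀ i ≤ k, x i ∈ Set.Icc a (a + δ)) (hy : y ∈ Set.Icc a (a + δ))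
    (hη : ∀ i ≤ k, |P.eval (x i)| ≤ η) :
    |P.eval y| ≤ η * ((2 * δ / s) ^ k / k.factorial) := by
  have hsep : ∀ i ≤ k, ∀ j ≤ k, |(j:ℝ) - i| * s ≤ |x j - x i| := by
    have key : ∀ i j : ℕ, i ≤ j → j ≤ k → |(j:ℝ) - i| * s ≤ |x j - x i| := by
      intro i j hij hj
      obtain ⟨d, rfl⟩ := Nat.exists_eq_add_of_le hij
      have := sep_points_diff s k x hx i d hj
      have h2 : |((i + d : ℕ):ℝ) - i| = d := by push_cast; simp
      rw [h2]
      exact le_trans (by linarith) (le_abs_self _)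
    intro i hi j hj
    rcases le_total i j with h | h
    · exact key i j h hj
    · rw [abs_sub_comm, abs_sub_comm (x j)]
      exact key j i h hi
  have hinj : Set.InjOn x (Finset.range (k+1) : Finset ℕ) := by
    intro i hi j hj hij
    simp only [Finset.coe_range, Set.mem_Iio] at hi hj
    have := hsep i (by omega) j (by omega)
    rw [hij, sub_self, abs_zero] at this
    have h0 : |(j:ℝ) - i| ≤ 0 := by
      by_contra hc
      push Not at hc
      have := mul_pos hc hs
      linarith
    have := abs_nonpos_iff.1 h0
    have : (j:ℝ) = i := by linarith
    exact_mod_cast this.symm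
  have hdeg : P.degree < (Finset.range (k+1)).card := by
    rw [Finset.card_range]
    exact lt_of_le_of_lt Polynomial.degree_le_natDegree (by exact_mod_cast Nat.lt_succ_of_le hP)
  have hPe := Lagrange.eq_interpolate hinj hdeg
  have hη0 : 0 ≤ η := le_trans (abs_nonneg _) (hη 0 (by omega))
  have hEv : P.eval y = ∑ j ∈ Finset.range (k+1), P.eval (x j) *
      ∏ i ∈ (Finset.range (k+1)).erase j, ((x j - x i)⁻¹ * (y - x i)) := by
    conv_lhs => rw [hPe]
    rw [Lagrange.interpolate_apply, Polynomial.eval_finsetSum]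
    refine Finset.sum_congr rfl fun j hj => ?_
    rw [Polynomial.eval_mul, Polynomial.eval_C, Lagrange.basis, Polynomial.eval_prod]
    congr 1
    refine Finset.prod_congr rfl fun i hi => ?_
    simp [Lagrange.basisDivisor]
  have hbasis : ∀ j ∈ Finset.range (k+1),
      |∏ i ∈ (Finset.range (k+1)).erase j, ((x j - x i)⁻¹ * (y - x i))| ≤
        (δ / s) ^ k / k.factorial * (k.choose j) := by
    intro j hj
    have hjk : j ≤ k := by simpa [Nat.lt_succ_iff] using hj
    rw [Finset.abs_prod]
    calc ∏ i ∈ (Finset.range (k+1)).erase j, |(x j - x i)⁻¹ * (y - x i)|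
        ≤ ∏ i ∈ (Finset.range (k+1)).erase j, ((δ / s) * |(j:ℝ) - i|⁻¹) := by
          refine Finset.prod_le_prod (fun _ _ => abs_nonneg _) fun i hi => ?_
          rw [Finset.mem_erase, Finset.mem_range] at hi
          have hik : i ≤ k := by omega
          have hji : 0 < |(j:ℝ) - i| := by
            rw [abs_pos, sub_ne_zero]
            intro h
            exact hi.1 (by exact_mod_cast h.symm)
          have h1 := hsep i hik j hjk
          have h2 : |y - x i| ≤ δ := by
            have := hxJ i hik
            rw [abs_le]
            constructor <;> linarith [this.1, this.2, hy.1, hy.2]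
          rw [abs_mul, abs_inv]
          calc |x j - x i|⁻¹ * |y - x i| ≤ (|(j:ℝ) - i| * s)⁻¹ * δ := by gcongr
            _ = _ := by field_simp
      _ = (δ / s) ^ k / (j.factorial * (k-j).factorial) := by
          rw [Finset.prod_mul_distrib, Finset.prod_const, Finset.prod_inv_distrib,
            prod_abs_sub k j hjk, Finset.card_erase_of_mem hj, Finset.card_range]
          simp [div_eq_mul_inv]
      _ = _ := by
          have := Nat.choose_mul_factorial_mul_factorial hjk
          have h : (k.choose j : ℝ) * j.factorial * (k-j).factorial = k.factorial := by
            exact_mod_cast this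
          have h1 : (j.factorial : ℝ) ≠ 0 := by positivity
          have h2 : ((k-j).factorial : ℝ) ≠ 0 := by positivity
          rw [← h]
          have h3 : (k.choose j : ℝ) ≠ 0 := by
            have := Nat.choose_pos hjk
            positivity
          field_simp
  calc |P.eval y| ≤ ∑ j ∈ Finset.range (k+1), η * ((δ / s) ^ k / k.factorial * (k.choose j)) := by
        rw [hEv]
        refine (Finset.abs_sum_le_sum_abs _ _).trans (Finset.sum_le_sum fun j hj => ?_)
        rw [abs_mul]
        exact mul_le_mul (hη j (by simpa [Nat.lt_succ_iff] using hj)) (hbasis j hj) (abs_nonneg _) hη0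
    _ = _ := by
        rw [← Finset.mul_sum, ← Finset.mul_sum]
        have : (∑ j ∈ Finset.range (k+1), (k.choose j : ℝ)) = 2 ^ k := by
          exact_mod_cast Nat.sum_range_choose k
        rw [this, mul_div_assoc, mul_pow]
        ring

/-- The class of functions used in the one-dimensional part. -/
def GoodFn (A : ℝ) (f : ℝ → ℝ) : Prop :=
  ∀ t ∈ Set.Icc (0:ℝ) 1, ∀ k : ℕ, ContDiffAt ℝ k f t ∧ |iteratedDeriv k f t| ≤ A ^ k * k.factorial

lemma taylor_approx (A : ℝ) (hA : 0 < A) (f : ℝ → ℝ) (hf : GoodFn A f) (a δ : ℝ) (hδ : 0 < δ)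
    (ha : 0 ≤ a) (hb : a + δ ≤ 1) (k : ℕ) :
    ∃ P : Polynomial ℝ, P.natDegree ≤ k ∧ ∀ y ∈ Set.Icc a (a + δ),
      |f y - P.eval y| ≤ (2 * A * δ) ^ (k+1) := by
  have hsub : Set.Icc a (a + δ) ⊆ Set.Icc 0 1 := Set.Icc_subset_Icc ha hb
  refine ⟨∑ j ∈ Finset.range (k+1), Polynomial.C ((j.factorial : ℝ)⁻¹ *
    iteratedDerivWithin j f (Set.Icc a (a + δ)) a) * (Polynomial.X - Polynomial.C a) ^ j, ?_, ?_⟩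
  · refine Polynomial.natDegree_sum_le_of_forall_le _ _ fun j hj => ?_
    refine (Polynomial.natDegree_C_mul_le _ _).trans ?_
    rw [Polynomial.natDegree_pow, Polynomial.natDegree_X_sub_C, mul_one]
    simpa [Nat.lt_succ_iff] using hj
  · intro y hy
    have h := taylor_mean_remainder_bound (f := f) (a := a) (b := a + δ) (x := y) (n := k)
      (C := A ^ (k+1) * (k+1).factorial) (by linarith)
      (fun t ht => ((hf t (hsub ht) (k+1)).1).contDiffWithinAt) hy (by
        intro t ht
        rw [iteratedDerivWithin_eq_iteratedDeriv (uniqueDiffOn_Icc (by linarith))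
          (hf t (hsub ht) (k+1)).1 ht]
        exact (hf t (hsub ht) (k+1)).2)
    rw [taylor_within_apply] at h
    have e : Polynomial.eval y (∑ j ∈ Finset.range (k+1), Polynomial.C ((j.factorial : ℝ)⁻¹ *
        iteratedDerivWithin j f (Set.Icc a (a + δ)) a) * (Polynomial.X - Polynomial.C a) ^ j) =
        ∑ j ∈ Finset.range (k+1), ((j.factorial : ℝ)⁻¹ * (y - a) ^ j) •
          iteratedDerivWithin j f (Set.Icc a (a + δ)) a := by
      rw [Polynomial.eval_finsetSum]
      refine Finset.sum_congr rfl fun j hj => ?_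
      simp
      ring
    rw [e]
    refine h.trans ?_
    have h0 : 0 ≤ y - a := by linarith [hy.1]
    have h1 : y - a ≤ δ := by linarith [hy.2]
    calc A ^ (k+1) * (k+1).factorial * (y - a) ^ (k+1) / k.factorial
        ≤ A ^ (k+1) * (k+1).factorial * δ ^ (k+1) / k.factorial := by gcongr
      _ = ((k+1 : ℕ) : ℝ) * (A * δ) ^ (k+1) := by
        rw [Nat.factorial_succ, mul_pow]
        have : (k.factorial : ℝ) ≠ 0 := by positivity
        push_cast
        field_simp
      _ ≤ 2 ^ (k+1) * (A * δ) ^ (k+1) := by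
        gcongr
        exact_mod_cast (Nat.lt_two_pow_self (n := k+1)).le
      _ = _ := by rw [← mul_pow]; ring

lemma interp_step (A : ℝ) (hA : 0 < A) (f : ℝ → ℝ) (hf : GoodFn A f) (lam : ℝ) (hl : 0 < lam)
    (hl1 : lam ≤ 1) (a δ : ℝ) (hδ : 0 < δ)
    (ha : 0 ≤ a) (hb : a + δ ≤ 1) (hsm : 2 * A * δ * (12 / lam) ≤ 1/2) (E : Set ℝ)
    (hE : E ⊆ Set.Icc a (a+δ)) (hEv : ENNReal.ofReal (lam * δ) ≤ volume E) (ε : ℝ)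
    (hε : ∀ t ∈ E, |f t| ≤ ε) (y : ℝ) (hy : y ∈ Set.Icc a (a+δ)) (n : ℕ) (hε0 : 0 ≤ ε) :
    |f y| ≤ (12 / lam) ^ n * ε + 2 * (1/2) ^ n := by
  have hK : 1 ≤ 12 / lam := by rw [le_div_iff₀ hl]; linarith
  cases n with
  | zero =>
    have := (hf y ⟨by linarith [hy.1], by linarith [hy.2]⟩ 0).2
    simp at this ⊢
    linarith
  | succ k =>
    obtain ⟨P, hP, hPf⟩ := taylor_approx A hA f hf a δ hδ ha hb k
    set s := lam * δ / (2 * (k+1)) with hsdef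
    have hs : 0 < s := by positivity
    obtain ⟨x, hx, hx'⟩ := sep_points s hs k E ⟨a, fun z hz => (hE hz).1⟩ (by
      refine lt_of_lt_of_le ?_ hEv
      rw [ENNReal.ofReal_lt_ofReal_iff (by positivity)]
      have : 2 * (k+1) * s = lam * δ := by rw [hsdef]; field_simp
      nlinarith)
    set r := (2 * A * δ) ^ (k+1) with hr
    have hr0 : 0 ≤ r := by positivity
    have hPy := poly_bound P k hP s hs x hx' a δ (ε + r) y hδ (fun i hi => hE (hx i hi)) hy (by
      intro i hi
      have h1 := hPf (x i) (hE (hx i hi))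
      have h2 := hε (x i) (hx i hi)
      rw [abs_le] at h1 h2 ⊢
      constructor <;> linarith [h1.1, h1.2, h2.1, h2.2])
    have hK2 : (2 * δ / s) ^ k / k.factorial ≤ (12 / lam) ^ (k+1) := by
      have e1 : 2 * δ / s = (4 / lam) * ((k:ℝ)+1) := by
        rw [hsdef]; field_simp; norm_num
      have e2 : ((k:ℝ)+1) ^ k / k.factorial = ((k:ℝ)+1) ^ (k+1) / (k+1).factorial := by
        rw [Nat.factorial_succ]
        have : (k.factorial : ℝ) ≠ 0 := by positivity
        push_cast
        field_simp
        ring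
      have e3 : ((k:ℝ)+1) ^ (k+1) / (k+1).factorial ≤ 3 ^ (k+1) := by
        refine (Real.pow_div_factorial_le_exp _ (by positivity) _).trans ?_
        have : Real.exp ((k:ℝ)+1) = (Real.exp 1) ^ (k+1) := by
          rw [← Real.exp_nat_mul]; push_cast; ring_nf
        rw [this]
        gcongr
        exact (Real.exp_one_lt_d9.trans (by norm_num)).le
      have h4 : 1 ≤ 4 / lam := by rw [le_div_iff₀ hl]; linarith
      rw [e1, mul_pow, mul_div_assoc, e2]
      calc (4 / lam) ^ k * (((k:ℝ)+1) ^ (k+1) / (k+1).factorial)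
          ≤ (4 / lam) ^ (k+1) * 3 ^ (k+1) := by
            gcongr
            omega
        _ = _ := by rw [← mul_pow]; congr 1; ring
    have hfy := hPf y hy
    have hPy2 : |P.eval y| ≤ (ε + r) * (12 / lam) ^ (k+1) :=
      hPy.trans (by gcongr)
    have hrK : r * (12 / lam) ^ (k+1) ≤ (1/2) ^ (k+1) := by
      rw [hr, ← mul_pow]
      gcongr
    have hr1 : r ≤ r * (12 / lam) ^ (k+1) := le_mul_of_one_le_right hr0 (one_le_pow₀ hK)
    have : |f y| ≤ |P.eval y| + |f y - P.eval y| := by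
      have := abs_add_le (P.eval y) (f y - P.eval y)
      simpa using this
    linarith

lemma holder_step (A : ℝ) (hA : 0 < A) (f : ℝ → ℝ) (hf : GoodFn A f) (lam : ℝ) (hl : 0 < lam)
    (hl1 : lam ≤ 1) (a δ : ℝ) (hδ : 0 < δ)
    (ha : 0 ≤ a) (hb : a + δ ≤ 1) (hsm : 2 * A * δ * (12 / lam) ≤ 1/2) (E : Set ℝ)
    (hE : E ⊆ Set.Icc a (a+δ)) (hEv : ENNReal.ofReal (lam * δ) ≤ volume E) (ε : ℝ)
    (hε : ∀ t ∈ E, |f t| ≤ ε) (y : ℝ) (hy : y ∈ Set.Icc a (a+δ)) (hε0 : 0 < ε) :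
    |f y| ≤ 5 * ε ^ (Real.log 2 / (2 * Real.log (12 / lam))) := by
  set K := 12 / lam with hKd
  have hK : 12 ≤ K := by rw [hKd, le_div_iff₀ hl]; linarith
  have hlogK : 0 < Real.log K := Real.log_pos (by linarith)
  have hlog2 : 0 < Real.log 2 := Real.log_pos (by norm_num)
  have hlog2K : Real.log 2 ≤ Real.log K := Real.log_le_log (by norm_num) (by linarith)
  set θ := Real.log 2 / (2 * Real.log K) with hθ
  have hθ0 : 0 < θ := by positivity
  have hθ1 : θ ≤ 1/2 := by
    rw [hθ, div_le_iff₀ (by positivity)]; linarith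
  by_cases h1 : 1 ≤ ε
  · have := (hf y ⟨by linarith [hy.1], by linarith [hy.2]⟩ 0).2
    simp at this
    have := Real.one_le_rpow h1 hθ0.le
    linarith
  push Not at h1
  have hL : 0 < -Real.log ε := by
    have := Real.log_neg hε0 h1
    linarith
  set u := -Real.log ε / (2 * Real.log K) with hu
  have hu0 : 0 ≤ u := by positivity
  set n := ⌊u⌋₊ with hn
  have hn1 : (n:ℝ) ≤ u := Nat.floor_le hu0
  have hn2 : u < n + 1 := Nat.lt_floor_add_one u
  have h := interp_step A hA f hf lam hl hl1 a δ hδ ha hb hsm E hE hEv ε hε y hy n hε0.le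
  rw [← hKd] at h
  have b1 : K ^ n * ε ≤ ε ^ θ := by
    have : K ^ n * ε = Real.exp (n * Real.log K + Real.log ε) := by
      rw [Real.exp_add, Real.exp_log hε0, Real.exp_nat_mul, Real.exp_log (by linarith)]
    rw [this, Real.rpow_def_of_pos hε0]
    apply Real.exp_le_exp.2
    have h3 : u * Real.log K = -Real.log ε / 2 := by rw [hu]; field_simp
    have h4 : n * Real.log K ≤ u * Real.log K := by gcongr
    nlinarith
  have b2 : (1/2:ℝ) ^ n ≤ 2 * ε ^ θ := by
    have e1 : (1/2:ℝ) ^ n = Real.exp (- n * Real.log 2) := by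
      rw [neg_mul, Real.exp_neg, Real.exp_nat_mul, Real.exp_log (by norm_num)]; simp
    have e2 : 2 * ε ^ θ = Real.exp (Real.log 2 + Real.log ε * θ) := by
      rw [Real.exp_add, Real.exp_log (by norm_num), Real.rpow_def_of_pos hε0]
    rw [e1, e2]
    apply Real.exp_le_exp.2
    have h3 : Real.log ε * θ = - u * Real.log 2 := by rw [hu, hθ]; field_simp
    rw [h3]
    nlinarith
  linarith

lemma chain_left (A : ℝ) (hA : 0 < A) (f : ℝ → ℝ) (hf : GoodFn A f) (lam : ℝ) (hl : 0 < lam)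
    (hl1 : lam ≤ 1/2) (N : ℕ) (δ : ℝ) (hδ : 0 < δ) (hN : N * δ = 1)
    (hsm : 2 * A * (2 * δ) * (12 / lam) ≤ 1/2) (θ : ℝ)
    (hθ : θ = Real.log 2 / (2 * Real.log (12 / lam))) (hθ0 : 0 < θ) (hθ1 : θ < 1) (j : ℕ) :
    j < N → ∀ ε > 0, (∀ t ∈ Set.Icc (j * δ) (j * δ + δ), |f t| ≤ ε) →
      |f 0| ≤ 5 ^ j * ε ^ (θ ^ j) := by
  induction j with
  | zero =>
    intro _ ε hε h
    simpa using h 0 (by simp [hδ.le])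
  | succ j ih =>
    intro hj ε hε h
    have hj' : ((j:ℝ) + 1 + 1) * δ ≤ 1 := by
      have : ((j:ℝ) + 1 + 1) ≤ N := by exact_mod_cast hj
      exact (mul_le_mul_of_nonneg_right this hδ.le).trans hN.le
    have h1 : ∀ t ∈ Set.Icc (j * δ) (j * δ + δ), |f t| ≤ 5 * ε ^ θ := by
      intro t ht
      rw [hθ]
      refine holder_step A hA f hf lam hl (by linarith) (j * δ) (2 * δ) (by positivity)
        (by positivity) (by linarith) hsm (Set.Icc ((j+1 : ℕ) * δ) ((j+1 : ℕ) * δ + δ)) ?_ ?_ ε h t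
        ⟨ht.1, by linarith [ht.2]⟩ hε
      · push_cast
        apply Set.Icc_subset_Icc <;> linarith
      · rw [Real.volume_Icc]
        apply ENNReal.ofReal_le_ofReal
        nlinarith
    have h2 := ih (by omega) (5 * ε ^ θ) (by positivity) h1
    refine h2.trans ?_
    rw [Real.mul_rpow (by norm_num) (by positivity), ← Real.rpow_mul hε.le, pow_succ' θ, pow_succ (5:ℝ),
      mul_assoc]
    have hp : θ ^ j ≤ 1 := pow_le_one₀ hθ0.le hθ1.le
    have : (5:ℝ) ^ (θ ^ j) ≤ 5 := by
      calc (5:ℝ) ^ (θ ^ j) ≤ (5:ℝ) ^ (1:ℝ) := Real.rpow_le_rpow_of_exponent_le (by norm_num) hp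
        _ = 5 := by simp
    gcongr

lemma one_dim (A : ℝ) (hA : 0 < A) (lam : ℝ) (hl : 0 < lam) (hl1 : lam ≤ 1/2) :
    ∃ C > 0, ∃ θ ∈ Set.Ioo (0:ℝ) 1, ∀ f : ℝ → ℝ, GoodFn A f → ∀ E ⊆ Set.Icc (0:ℝ) 1,
      ENNReal.ofReal lam ≤ volume E → ∀ ε > 0, (∀ t ∈ E, |f t| ≤ ε) → |f 0| ≤ C * ε ^ θ := by
  obtain ⟨N, hNlt⟩ := exists_nat_gt (8 * A * (12 / lam))
  have hK : 12 ≤ 12 / lam := by rw [le_div_iff₀ hl]; linarith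
  have hNpos : (0:ℝ) < N := lt_trans (by positivity) hNlt
  set δ : ℝ := 1 / N with hδd
  have hδ : 0 < δ := by positivity
  have hN : N * δ = 1 := by rw [hδd]; field_simp
  have hsm : 2 * A * (2 * δ) * (12 / lam) ≤ 1/2 := by
    have : 8 * A * (12 / lam) * δ ≤ N * δ := by gcongr
    linarith
  set θ := Real.log 2 / (2 * Real.log (12 / lam)) with hθ
  have hlogK : 0 < Real.log (12 / lam) := Real.log_pos (by linarith)
  have hlog2 : 0 < Real.log 2 := Real.log_pos (by norm_num)
  have hlog2K : Real.log 2 ≤ Real.log (12 / lam) := Real.log_le_log (by norm_num) (by linarith)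
  have hθ0 : 0 < θ := by positivity
  have hθ1 : θ < 1 := by
    rw [hθ, div_lt_one (by positivity)]; linarith
  have hN0 : N ≠ 0 := by
    rintro rfl
    simp at hNpos
  refine ⟨5 ^ N, by positivity, θ ^ N, ⟨by positivity, pow_lt_one₀ hθ0.le hθ1 hN0⟩, ?_⟩
  intro f hf E hE hEv ε hε hfE
  by_cases h1 : 1 ≤ ε
  · have := (hf 0 (by simp) 0).2
    simp at this
    have h2 := Real.one_le_rpow h1 (pow_nonneg hθ0.le N)
    have h3 : (1:ℝ) ≤ 5 ^ N := one_le_pow₀ (by norm_num)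
    nlinarith
  push Not at h1
  -- pigeonhole
  obtain ⟨j, hj, hjE⟩ : ∃ j < N, ENNReal.ofReal (lam * δ) ≤
      volume (E ∩ Set.Icc (j * δ) (j * δ + δ)) := by
    by_contra hcon
    push Not at hcon
    have hcov : E ⊆ ⋃ j ∈ Finset.range N, E ∩ Set.Icc (j * δ) (j * δ + δ) := by
      intro t ht
      have ht1 := hE ht
      simp only [Set.mem_iUnion, Finset.mem_range, Set.mem_inter_iff]
      by_cases hte : t = 1
      · refine ⟨N - 1, by omega, ht, ?_⟩
        rw [Nat.cast_sub (by omega)]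
        push_cast
        constructor <;> linarith
      · have htl : t < 1 := lt_of_le_of_ne ht1.2 hte
        have h0 : 0 ≤ t / δ := div_nonneg ht1.1 hδ.le
        have hf1 := Nat.floor_le h0
        have hf2 := Nat.lt_floor_add_one (t / δ)
        rw [le_div_iff₀ hδ] at hf1
        rw [div_lt_iff₀ hδ] at hf2
        refine ⟨⌊t / δ⌋₊, ?_, ht, hf1, by linarith⟩
        rw [Nat.floor_lt h0, div_lt_iff₀ hδ]
        linarith
    have hlt : volume E < ENNReal.ofReal lam := by
      calc volume E ≤ ∑ j ∈ Finset.range N, volume (E ∩ Set.Icc (j * δ) (j * δ + δ)) :=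
            (measure_mono hcov).trans (measure_biUnion_finset_le _ _)
        _ < ∑ j ∈ Finset.range N, ENNReal.ofReal (lam * δ) := by
            apply ENNReal.sum_lt_sum_of_nonempty
            · simpa using hN0
            · intro j hj
              exact hcon j (by simpa using hj)
        _ = ENNReal.ofReal lam := by
            rw [Finset.sum_const, Finset.card_range, nsmul_eq_mul, ← ENNReal.ofReal_natCast,
              ← ENNReal.ofReal_mul (by positivity)]
            congr 1
            linear_combination lam * hN
    exact absurd hEv (not_le.2 hlt)
  have hj1 : ((j:ℝ) + 1) * δ ≤ 1 := by
    have : ((j:ℝ) + 1) ≤ N := by exact_mod_cast hj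
    exact (mul_le_mul_of_nonneg_right this hδ.le).trans hN.le
  have hst : ∀ t ∈ Set.Icc (j * δ) (j * δ + δ), |f t| ≤ 5 * ε ^ θ := by
    intro t ht
    refine holder_step A hA f hf lam hl (by linarith) (j * δ) δ hδ (by positivity) (by linarith)
      ?_ _ Set.inter_subset_right hjE ε (fun t ht => hfE t ht.1) t ht hε
    have : 0 ≤ 2 * A * δ * (12 / lam) := by positivity
    linarith
  have h := chain_left A hA f hf lam hl hl1 N δ hδ hN hsm θ hθ hθ0 hθ1 j hj _ (by positivity) hst
  refine h.trans ?_
  have hp : θ ^ j ≤ 1 := pow_le_one₀ hθ0.le hθ1.le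
  have h5 : (5:ℝ) ^ (θ ^ j) ≤ 5 := by
    calc (5:ℝ) ^ (θ ^ j) ≤ (5:ℝ) ^ (1:ℝ) := Real.rpow_le_rpow_of_exponent_le (by norm_num) hp
      _ = 5 := by simp
  rw [Real.mul_rpow (by norm_num) (by positivity), ← Real.rpow_mul hε.le, ← pow_succ']
  calc (5:ℝ) ^ j * (5 ^ (θ ^ j) * ε ^ (θ ^ (j+1))) ≤ 5 ^ j * (5 * ε ^ (θ ^ (j+1))) := by gcongr
    _ = 5 ^ (j+1) * ε ^ (θ ^ (j+1)) := by ring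
    _ ≤ 5 ^ N * ε ^ (θ ^ N) := by
      gcongr ?_ * ?_
      · exact pow_le_pow_right₀ (by norm_num) hj
      · exact Real.rpow_le_rpow_of_exponent_ge hε h1.le (pow_le_pow_of_le_one hθ0.le hθ1.le hj)

lemma exists_ray {n : ℕ} (R : ℝ) (hR : 0 < R) (W : Set (EuclideanSpace ℝ (Fin n)))
    (hW : MeasurableSet W) (hsub : W ⊆ ball 0 R) (x : EuclideanSpace ℝ (Fin n))
    (hx : x ∈ ball (0 : EuclideanSpace ℝ (Fin n)) R) (c : ENNReal)
    (hc : c * volume (ball (0 : EuclideanSpace ℝ (Fin n)) (2 * R)) <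
      volume W * ENNReal.ofReal (1/4)) :
    ∃ z ∈ ball (0 : EuclideanSpace ℝ (Fin n)) (2 * R),
      c ≤ volume {t : ℝ | t ∈ Set.Icc (0:ℝ) 1 ∧ x + t • (z - x) ∈ W} := by
  by_contra hcon
  push Not at hcon
  set B := ball (0 : EuclideanSpace ℝ (Fin n)) (2 * R) with hB
  set T : Set (EuclideanSpace ℝ (Fin n) × ℝ) :=
    {p | p.1 ∈ B ∧ p.2 ∈ Set.Icc (3/4:ℝ) 1 ∧ x + p.2 • (p.1 - x) ∈ W} with hT
  have hTm : MeasurableSet T := by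
    refine MeasurableSet.inter (measurable_fst measurableSet_ball)
      (MeasurableSet.inter (measurable_snd measurableSet_Icc) ?_)
    have : Measurable fun p : EuclideanSpace ℝ (Fin n) × ℝ => x + p.2 • (p.1 - x) := by fun_prop
    exact this hW
  have h1 : (volume.prod volume) T ≤ c * volume B := by
    rw [Measure.prod_apply hTm]
    calc ∫⁻ z, volume (Prod.mk z ⁻¹' T) ≤ ∫⁻ z, B.indicator (fun _ => c) z := by
          refine lintegral_mono fun z => ?_
          by_cases hz : z ∈ B
          · simp only [Set.indicator_of_mem hz]
            refine le_trans (measure_mono ?_) (hcon z hz).le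
            rintro t ⟨_, ht, htW⟩
            exact ⟨⟨by linarith [ht.1], ht.2⟩, htW⟩
          · have : Prod.mk z ⁻¹' T = ∅ := by
              ext t
              simp [hT, hz]
            simp [this]
      _ = c * volume B := by
          rw [lintegral_indicator measurableSet_ball, setLIntegral_const]
  have h2 : volume W * ENNReal.ofReal (1/4) ≤ (volume.prod volume) T := by
    rw [Measure.prod_apply_symm hTm]
    calc volume W * ENNReal.ofReal (1/4)
        = ∫⁻ t : ℝ, (Set.Icc (3/4:ℝ) 1).indicator (fun _ => volume W) t := by
          rw [lintegral_indicator measurableSet_Icc, setLIntegral_const, Real.volume_Icc]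
          norm_num
      _ ≤ ∫⁻ t : ℝ, volume ((fun z => (z, t)) ⁻¹' T) := by
          refine lintegral_mono fun t => ?_
          by_cases ht : t ∈ Set.Icc (3/4:ℝ) 1
          · simp only [Set.indicator_of_mem ht]
            have ht0 : 0 < t := by linarith [ht.1]
            have hWi : W ⊆ AffineMap.homothety x t '' ((fun z => (z, t)) ⁻¹' T) := by
              intro y hy
              have e : x + t • ((x + t⁻¹ • (y - x)) - x) = y := by
                rw [add_sub_cancel_left, smul_smul, mul_inv_cancel₀ ht0.ne', one_smul]
                abel
              refine ⟨x + t⁻¹ • (y - x), ⟨?_, ht, ?_⟩, ?_⟩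
              · have hy' := hsub hy
                rw [mem_ball_zero_iff] at hy' hx
                simp only [hB, mem_ball_zero_iff]
                have e2 : x + t⁻¹ • (y - x) = y + (t⁻¹ - 1) • (y - x) := by
                  rw [sub_smul, one_smul]; abel
                rw [e2]
                have hi : t⁻¹ - 1 ≤ 1/3 := by
                  have : t⁻¹ ≤ (3/4:ℝ)⁻¹ := inv_anti₀ (by norm_num) ht.1
                  norm_num at this ⊢
                  linarith
                have hi0 : 0 ≤ t⁻¹ - 1 := by
                  have := (one_le_inv₀ ht0).2 ht.2
                  linarith
                have h3 : ‖y - x‖ ≤ ‖y‖ + ‖x‖ := norm_sub_le _ _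
                have h4 := norm_add_le y ((t⁻¹ - 1) • (y - x))
                rw [norm_smul, Real.norm_of_nonneg hi0] at h4
                have h5 : (t⁻¹ - 1) * ‖y - x‖ ≤ 1/3 * ‖y - x‖ := by gcongr
                linarith
              · show x + t • ((x + t⁻¹ • (y - x)) - x) ∈ W
                rw [e]; exact hy
              · rw [AffineMap.homothety_apply]
                simp only [vsub_eq_sub, vadd_eq_add]
                rw [add_comm, e]
            refine (measure_mono hWi).trans ?_
            rw [Measure.addHaar_image_homothety]
            refine mul_le_of_le_one_left (zero_le) ?_
            rw [ENNReal.ofReal_le_one, abs_of_nonneg (by positivity)]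
            exact pow_le_one₀ ht0.le ht.2
          · simp [ht]
  exact absurd (h2.trans h1) (not_le.2 hc)

lemma goodFn_line {n : ℕ} (R : ℝ) (hR : 0 < R) (ρ : ℝ) (hρ : 0 < ρ) (M : ℝ) (hM : 0 < M)
    (ξ : EuclideanSpace ℝ (Fin n) → ℝ)
    (hξ : AnalyticOnNhd ℝ ξ (ball (0 : EuclideanSpace ℝ (Fin n)) (2 * R)))
    (hb : ∀ x ∈ ball (0 : EuclideanSpace ℝ (Fin n)) (2 * R), ∀ k : ℕ,
          ‖iteratedFDeriv ℝ k ξ x‖ ≤ M * (ρ * R)⁻¹ ^ k * (Nat.factorial k))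
    (x w : EuclideanSpace ℝ (Fin n)) (hw : ‖w‖ ≤ 3 * R)
    (hseg : ∀ t ∈ Set.Icc (0:ℝ) 1, x + t • w ∈ ball (0 : EuclideanSpace ℝ (Fin n)) (2 * R)) :
    GoodFn (3 / ρ) (fun t => M⁻¹ * ξ (x + t • w)) := by
  intro t ht k
  have hmem := hseg t ht
  set L : ℝ →L[ℝ] EuclideanSpace ℝ (Fin n) := ContinuousLinearMap.toSpanSingleton ℝ w with hL
  set s : Set (EuclideanSpace ℝ (Fin n)) := (fun v => x + v) ⁻¹' ball 0 (2 * R) with hs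
  have hso : IsOpen s := isOpen_ball.preimage (by fun_prop)
  have hLt : L t ∈ s := by
    rw [hs, Set.mem_preimage, hL, ContinuousLinearMap.toSpanSingleton_apply]
    exact hmem
  have hg : ContDiffOn ℝ k (fun v => ξ (x + v)) s := by
    intro v hv
    have h1 : ContDiffAt ℝ k ξ (x + v) := (hξ (x + v) hv).contDiffAt
    exact (ContDiffAt.comp v (g := ξ) (f := fun v => x + v) h1 (by fun_prop)).contDiffWithinAt
  have hLo : IsOpen (L ⁻¹' s) := hso.preimage L.continuous
  have hcd : ContDiffAt ℝ k (fun t : ℝ => ξ (x + t • w)) t := by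
    have h1 : ContDiffAt ℝ k ξ (x + t • w) := (hξ _ hmem).contDiffAt
    exact ContDiffAt.comp t (g := ξ) (f := fun t : ℝ => x + t • w) h1 (by fun_prop)
  refine ⟨contDiffAt_const.mul hcd, ?_⟩
  rw [iteratedDeriv_const_mul_field]
  have hcomp := L.iteratedFDerivWithin_comp_right hg hso.uniqueDiffOn hLo.uniqueDiffOn hLt le_rfl
  rw [iteratedFDerivWithin_of_isOpen k hLo hLt, iteratedFDerivWithin_of_isOpen k hso hLt,
    iteratedFDeriv_comp_add_left] at hcomp
  have e : ((fun v => ξ (x + v)) ∘ L) = fun t : ℝ => ξ (x + t • w) := by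
    funext t; simp [hL]
  rw [e] at hcomp
  have h2 : |iteratedDeriv k (fun t : ℝ => ξ (x + t • w)) t| ≤
      M * (ρ * R)⁻¹ ^ k * (Nat.factorial k) * ‖w‖ ^ k := by
    rw [iteratedDeriv_eq_iteratedFDeriv, hcomp, ContinuousMultilinearMap.compContinuousLinearMap_apply,
      ← Real.norm_eq_abs]
    refine (ContinuousMultilinearMap.le_opNorm _ _).trans ?_
    have hLt' : x + L t = x + t • w := by simp [hL]
    rw [hLt']
    simp only [hL, ContinuousLinearMap.toSpanSingleton_apply, one_smul, Finset.prod_const,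
      Finset.card_univ, Fintype.card_fin]
    gcongr
    exact hb _ hmem k
  rw [abs_mul, abs_of_pos (inv_pos.2 hM)]
  calc M⁻¹ * |iteratedDeriv k (fun t : ℝ => ξ (x + t • w)) t|
      ≤ M⁻¹ * (M * (ρ * R)⁻¹ ^ k * (Nat.factorial k) * (3 * R) ^ k) := by
        gcongr
        exact h2.trans (by gcongr)
    _ = ((ρ * R)⁻¹ * (3 * R)) ^ k * k.factorial := by
        rw [mul_pow, mul_assoc M, mul_assoc M, inv_mul_cancel_left₀ hM.ne']; ring
    _ = _ := by
        congr 2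
        field_simp

theorem stmt_3 (n : ℕ) (hn : 1 ≤ n) (R : ℝ) (hR : 0 < R) (ρ : ℝ) (hρ : ρ ∈ Set.Ioc (0:ℝ) 1)
    (ω : Set (EuclideanSpace ℝ (Fin n)))
    (hsub : ω ⊆ ball (0 : EuclideanSpace ℝ (Fin n)) R)
    (hmeas : MeasurableSet ω) (hpos : 0 < volume ω) :
    ∃ C > 0, ∃ θ ∈ Set.Ioo (0:ℝ) 1,
      ∀ M > 0, ∀ ξ : EuclideanSpace ℝ (Fin n) → ℝ,
        AnalyticOnNhd ℝ ξ (ball (0 : EuclideanSpace ℝ (Fin n)) (2 * R)) →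
        (∀ x ∈ ball (0 : EuclideanSpace ℝ (Fin n)) (2 * R), ∀ k : ℕ,
          ‖iteratedFDeriv ℝ k ξ x‖ ≤ M * (ρ * R)⁻¹ ^ k * (Nat.factorial k)) →
        ∀ x ∈ ball (0 : EuclideanSpace ℝ (Fin n)) R,
          |ξ x| ≤ C * M ^ (1 - θ) * (∫ y in ω, |ξ y|) ^ θ := by
  have hsub2 : ω ⊆ ball (0 : EuclideanSpace ℝ (Fin n)) (2 * R) :=
    hsub.trans (ball_subset_ball (by linarith))
  have hBfin : volume (ball (0 : EuclideanSpace ℝ (Fin n)) (2 * R)) ≠ ⊤ := measure_ball_lt_top.ne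
  have hωfin : volume ω ≠ ⊤ := ne_top_of_le_ne_top hBfin (measure_mono hsub2)
  set V := volume.real ω with hV
  set B := volume.real (ball (0 : EuclideanSpace ℝ (Fin n)) (2 * R)) with hB
  have hVpos : 0 < V := ENNReal.toReal_pos hpos.ne' hωfin
  have hVB : V ≤ B := measureReal_mono hsub2 hBfin
  have hBpos : 0 < B := by linarith
  set lam := V / (16 * B) with hlam
  have hl : 0 < lam := by positivity
  have hl1 : lam ≤ 1/2 := by
    rw [hlam, div_le_iff₀ (by positivity)]; linarith
  obtain ⟨C, hC, θ, hθ, H⟩ := one_dim (3 / ρ) (div_pos (by norm_num) hρ.1) lam hl hl1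
  refine ⟨C * (2 / V) ^ θ, by positivity, θ, hθ, ?_⟩
  intro M hM ξ hξ hb x hx
  have hcont : ContinuousOn ξ (ball (0 : EuclideanSpace ℝ (Fin n)) (2 * R)) := hξ.continuousOn
  have hbd : ∀ y ∈ ball (0 : EuclideanSpace ℝ (Fin n)) (2 * R), |ξ y| ≤ M := by
    intro y hy
    have := hb y hy 0
    simpa using this
  have hint : IntegrableOn (fun y => |ξ y|) ω := by
    refine IntegrableOn.of_bound (C := M) hωfin.lt_top ?_ ?_
    · exact ((hcont.abs).mono hsub2).aestronglyMeasurable hmeas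
    · filter_upwards [ae_restrict_mem hmeas] with y hy
      simpa using hbd y (hsub2 hy)
  set I := ∫ y in ω, |ξ y| with hI
  have hI0 : 0 ≤ I := integral_nonneg fun _ => abs_nonneg _
  have key : ∀ ε > 2 / V * I, |ξ x| ≤ C * M ^ (1 - θ) * ε ^ θ := by
    intro ε hε
    have hε0 : 0 < ε := lt_of_le_of_lt (by positivity) hε
    set W : Set (EuclideanSpace ℝ (Fin n)) := ω ∩ {y | |ξ y| < ε} with hW
    have hWe : W = ω ∩ (ball 0 (2 * R) ∩ (fun y => |ξ y|) ⁻¹' Set.Iio ε) := by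
      ext y
      constructor
      · rintro ⟨h1, h2⟩; exact ⟨h1, hsub2 h1, h2⟩
      · rintro ⟨h1, _, h2⟩; exact ⟨h1, h2⟩
    have hWm : MeasurableSet W := by
      rw [hWe]
      exact hmeas.inter (hcont.abs.isOpen_inter_preimage isOpen_ball isOpen_Iio).measurableSet
    have hmark := mul_meas_ge_le_integral_of_nonneg (μ := volume.restrict ω)
      (f := fun y => |ξ y|) (ae_of_all _ fun _ => abs_nonneg _) hint ε
    have hdiff : ω \ W = {y | ε ≤ |ξ y|} ∩ ω := by
      ext y
      simp only [hW, Set.mem_sdiff, Set.mem_inter_iff, Set.mem_ofPred_eq, not_and, not_lt]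
      tauto
    have hrestr : (volume.restrict ω).real {y | ε ≤ |ξ y|} = volume.real (ω \ W) := by
      rw [measureReal_def, Measure.restrict_apply' hmeas, hdiff, measureReal_def]
    rw [hrestr] at hmark
    have hsum : volume.real (ω \ W) = V - volume.real W :=
      measureReal_sdiff Set.inter_subset_left hWm hωfin
    have hWV : V / 2 ≤ volume.real W := by
      have h1 : 2 / V * I < ε := hε
      have h2 : I < ε * (V / 2) := by
        have : 2 / V * I * (V / 2) < ε * (V / 2) := by gcongr
        calc I = 2 / V * I * (V / 2) := by field_simp
          _ < _ := this
      have h3 : ε * (V - volume.real W) < ε * (V / 2) := by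
        rw [← hsum]; exact hmark.trans_lt h2
      have := lt_of_mul_lt_mul_left h3 hε0.le
      linarith
    have hWfin : volume W ≠ ⊤ := ne_top_of_le_ne_top hωfin (measure_mono Set.inter_subset_left)
    obtain ⟨z, hz, hzv⟩ := exists_ray R hR W hWm (Set.inter_subset_left.trans hsub) x hx
      (ENNReal.ofReal lam) (by
        rw [← ofReal_measureReal hBfin, ← ofReal_measureReal hWfin,
          ← ENNReal.ofReal_mul hl.le, ← ENNReal.ofReal_mul measureReal_nonneg,
          ENNReal.ofReal_lt_ofReal_iff (by linarith)]
        have : lam * B = V / 16 := by rw [hlam]; field_simp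
        rw [← hB, this]
        linarith)
    have hx2 : x ∈ ball (0 : EuclideanSpace ℝ (Fin n)) (2 * R) :=
      ball_subset_ball (by linarith) hx
    have hgood := goodFn_line R hR ρ hρ.1 M hM ξ hξ hb x (z - x) (by
        rw [mem_ball_zero_iff] at hx hz
        linarith [norm_sub_le z x]) (by
        intro t ht
        have := (convex_ball (0 : EuclideanSpace ℝ (Fin n)) (2 * R)).add_smul_sub_mem hx2 hz ht
        exact this)
    have h := H _ hgood _ (fun t ht => ht.1) hzv (M⁻¹ * ε) (by positivity) (by
      rintro t ⟨_, ht⟩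
      rw [abs_mul, abs_of_pos (inv_pos.2 hM)]
      have : |ξ (x + t • (z - x))| ≤ ε := le_of_lt ht.2
      gcongr)
    simp only [zero_smul, add_zero] at h
    rw [abs_mul, abs_of_pos (inv_pos.2 hM), Real.mul_rpow (by positivity) hε0.le,
      Real.inv_rpow hM.le] at h
    have hM1 : M ^ (1 - θ) = M * (M ^ θ)⁻¹ := by
      rw [Real.rpow_sub hM, Real.rpow_one, div_eq_mul_inv]
    rw [hM1]
    calc |ξ x| = M * (M⁻¹ * |ξ x|) := by field_simp
      _ ≤ M * (C * ((M ^ θ)⁻¹ * ε ^ θ)) := by gcongr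
      _ = _ := by ring
  have hlim : Filter.Tendsto (fun ε : ℝ => C * M ^ (1 - θ) * ε ^ θ) (nhdsWithin (2 / V * I) (Set.Ioi (2 / V * I)))
      (nhds (C * M ^ (1 - θ) * (2 / V * I) ^ θ)) := by
    have : ContinuousAt (fun ε : ℝ => C * M ^ (1 - θ) * ε ^ θ) (2 / V * I) :=
      continuousAt_const.mul (Real.continuousAt_rpow_const _ _ (Or.inr hθ.1.le))
    exact this.tendsto.mono_left nhdsWithin_le_nhds
  have hfin := ge_of_tendsto hlim (by
    filter_upwards [self_mem_nhdsWithin] with ε hε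
    exact key ε hε)
  refine hfin.trans (le_of_eq ?_)
  rw [Real.mul_rpow (by positivity) hI0]
  ring
end

section
/- Let H and U be real Hilbert spaces, let (e_j)_{j∈ℕ} be a Hilbert (orthonormal) basis of H, let (λ_j)_{j∈ℕ} be a sequence of positive reals, and let B : H → U be a bounded linear operator satisfying the spectral-like condition (H) with constants N > 0 and γ ∈ (0,1). Fix T > 0 and a Lebesgue measurable set E ⊆ (0,T) with |E| > 0. For s ≥ 0 define the bounded operator S(s) : H → H by S(s)v := Σ_j e^{−λ_j s} ⟨v, e_j⟩ e_j, and let B* : U → H denote the Hilbert-space adjoint of B. Then there exists a constant C > 0 such that for every y₀ ∈ H there is a Bochner measurable control u : (0,T) → U with ‖u(t)‖_U ≤ C ‖y₀‖_H for almost every t ∈ (0,T), and S(T) y₀ + ∫_0^T χ_E(t) · S(T−t) (B* u(t)) dt = 0 (Bochner integral in H), where χ_E is the characteristic function of E. -/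
open MeasureTheory
open scoped RealInnerProductSpace

/-- The spectral projection `E_λ f = ∑_{λ_j ≤ λ} ⟨f, e_j⟩ e_j` associated with a Hilbert
basis `e` of `H` and a sequence of eigenvalues `lam`. -/
noncomputable def specProj {H : Type*} [NormedAddCommGroup H] [InnerProductSpace ℝ H]
    (e : HilbertBasis ℕ ℝ H) (lam : ℕ → ℝ) (l : ℝ) (f : H) : H :=
  ∑' j, (if lam j ≤ l then ⟪f, e j⟫ else 0) • e j

/-- The diagonal semigroup `S(s) v = ∑_j e^{-λ_j s} ⟨v, e_j⟩ e_j` associated with a Hilbert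
basis `e` of `H` and a sequence of eigenvalues `lam`. -/
noncomputable def diagSemigroup {H : Type*} [NormedAddCommGroup H] [InnerProductSpace ℝ H]
    (e : HilbertBasis ℕ ℝ H) (lam : ℕ → ℝ) (s : ℝ) (v : H) : H :=
  ∑' j, (Real.exp (-(lam j) * s) * ⟪v, e j⟫) • e j


section aux
variable {H : Type*} [NormedAddCommGroup H] [InnerProductSpace ℝ H]

/-- diagonal multiplier -/
noncomputable def dg (e : HilbertBasis ℕ ℝ H) (c : ℕ → ℝ) (v : H) : H :=
  ∑' j, (c j * ⟪v, e j⟫) • e j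

lemma hasSum_sq (e : HilbertBasis ℕ ℝ H) (v : H) :
    HasSum (fun j => ⟪v, e j⟫ ^ 2) (‖v‖ ^ 2) := by
  have h := e.hasSum_inner_mul_inner v v
  rw [real_inner_self_eq_norm_sq] at h
  refine h.congr_fun ?_ |> fun h => h
  intro j
  simp only [pow_two, real_inner_comm v (e j)]

lemma norm_le_of_coeff (e : HilbertBasis ℕ ℝ H) {v w : H} {K : ℝ} (hK : 0 ≤ K)
    (h : ∀ j, |⟪w, e j⟫| ≤ K * |⟪v, e j⟫|) : ‖w‖ ≤ K * ‖v‖ := by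
  have h1 := hasSum_sq e w
  have h2 := (hasSum_sq e v).mul_left (K ^ 2)
  have h3 : ‖w‖ ^ 2 ≤ K ^ 2 * ‖v‖ ^ 2 := by
    refine hasSum_le (fun j => ?_) h1 h2
    rw [← sq_abs, ← sq_abs ⟪v, e j⟫, ← mul_pow]
    exact pow_le_pow_left₀ (abs_nonneg _) (h j) 2
  rw [← mul_pow] at h3
  exact le_of_sq_le_sq h3 (by positivity)

lemma ext_coeff (e : HilbertBasis ℕ ℝ H) {v w : H} (h : ∀ j, ⟪v, e j⟫ = ⟪w, e j⟫) : v = w := by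
  have : ‖v - w‖ ≤ 0 * ‖(0 : H)‖ := by
    refine norm_le_of_coeff e le_rfl (fun j => ?_)
    simp [inner_sub_left, h j]
  rw [zero_mul] at this
  exact sub_eq_zero.1 (norm_le_zero_iff.1 this)

lemma hasSum_dg [CompleteSpace H] (e : HilbertBasis ℕ ℝ H) {c : ℕ → ℝ} {K : ℝ} (hc : ∀ j, |c j| ≤ K) (v : H) :
    HasSum (fun j => (c j * ⟪v, e j⟫) • e j) (dg e c v) := by
  have hm : Memℓp (fun j => c j * ⟪v, e j⟫) 2 := by
    refine memℓp_gen ?_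
    have h2 := ((hasSum_sq e v).mul_left (K ^ 2)).summable
    refine Summable.of_nonneg_of_le (fun j => by positivity) (fun j => ?_) h2
    simp only [ENNReal.toReal_ofNat, Real.rpow_two, Real.norm_eq_abs, sq_abs, mul_pow]
    have : c j ^ 2 ≤ K ^ 2 := by
      rw [← sq_abs]; exact pow_le_pow_left₀ (abs_nonneg _) (hc j) 2
    gcongr
  exact (e.hasSum_repr_symm ⟨_, hm⟩).summable.hasSum

lemma inner_dg [CompleteSpace H] (e : HilbertBasis ℕ ℝ H) {c : ℕ → ℝ} {K : ℝ} (hc : ∀ j, |c j| ≤ K) (v : H) (j : ℕ) :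
    ⟪dg e c v, e j⟫ = c j * ⟪v, e j⟫ := by
  have h := (hasSum_dg e hc v).mapL (innerSL ℝ (e j))
  have h1 : HasSum (fun i => innerSL ℝ (e j) ((c i * ⟪v, e i⟫) • e i)) (c j * ⟪v, e j⟫) := by
    convert hasSum_single j ?_ using 1
    · simp [inner_smul_right, e.orthonormal.1 j]
    · intro i hi
      simp [inner_smul_right, e.orthonormal.2 hi.symm]
  rw [real_inner_comm]
  exact h.unique h1

lemma norm_dg_le [CompleteSpace H] (e : HilbertBasis ℕ ℝ H) {c : ℕ → ℝ} {K : ℝ} (hc : ∀ j, |c j| ≤ K) (v : H) :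
    ‖dg e c v‖ ≤ K * ‖v‖ := by
  refine norm_le_of_coeff e ((abs_nonneg _).trans (hc 0)) (fun j => ?_)
  rw [inner_dg e hc, abs_mul]
  gcongr
  exact hc j

lemma meas_dg [CompleteSpace H] (e : HilbertBasis ℕ ℝ H) {c : ℝ → ℕ → ℝ} (hm : ∀ j, Measurable fun t => c t j)
    (hc : ∀ t, ∃ K, ∀ j, |c t j| ≤ K) {f : ℝ → H} (hf : StronglyMeasurable f) :
    StronglyMeasurable fun t => dg e (c t) (f t) := by
  refine stronglyMeasurable_of_tendsto Filter.atTop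
    (f := fun n t => ∑ j ∈ Finset.range n, (c t j * ⟪f t, e j⟫) • e j) (fun n => ?_) ?_
  · refine Finset.stronglyMeasurable_fun_sum _ (fun j _ => ?_)
    exact ((hm j).stronglyMeasurable.mul (hf.inner stronglyMeasurable_const)).smul_const _
  · rw [tendsto_pi_nhds]
    intro t
    obtain ⟨K, hK⟩ := hc t
    exact (hasSum_dg e hK (f t)).tendsto_sum_nat

end aux

section aux2
variable {H U : Type*} [NormedAddCommGroup H] [InnerProductSpace ℝ H] [CompleteSpace H]
  [NormedAddCommGroup U] [InnerProductSpace ℝ U] [CompleteSpace U]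

lemma dg_symm (e : HilbertBasis ℕ ℝ H) {c : ℕ → ℝ} {K : ℝ} (hc : ∀ j, |c j| ≤ K) (v w : H) :
    ⟪dg e c v, w⟫ = ⟪v, dg e c w⟫ := by
  have h1 := e.hasSum_inner_mul_inner (dg e c v) w
  have h2 := e.hasSum_inner_mul_inner v (dg e c w)
  refine h1.unique ?_
  convert h2 using 2 with j
  rw [inner_dg e hc, real_inner_comm (dg e c w) (e j), inner_dg e hc, real_inner_comm w (e j)]
  ring

/-- The bounded diagonal operator. -/
noncomputable def dgL (e : HilbertBasis ℕ ℝ H) (c : ℕ → ℝ) (K : ℝ) (hc : ∀ j, |c j| ≤ K) :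
    H →L[ℝ] H :=
  LinearMap.mkContinuous
    { toFun := dg e c
      map_add' := fun x y => ext_coeff e fun j => by
        simp only [inner_add_left, inner_dg e hc]; ring
      map_smul' := fun r x => ext_coeff e fun j => by
        simp only [RingHom.id_apply, real_inner_smul_left, inner_dg e hc]; ring } K
    (fun x => norm_dg_le e hc x)

lemma dgL_apply (e : HilbertBasis ℕ ℝ H) (c : ℕ → ℝ) (K : ℝ) (hc : ∀ j, |c j| ≤ K) (v : H) :
    dgL e c K hc v = dg e c v := rfl

lemma exists_intCLM (Q : ℝ → H →L[ℝ] H) (hQ : ∀ z, StronglyMeasurable fun t => Q t z)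
    (F : Set ℝ) (hF : MeasurableSet F) (hFfin : volume F < ⊤) (K : ℝ)
    (hK : ∀ t ∈ F, ∀ z, ‖Q t z‖ ≤ K * ‖z‖) :
    (∀ z, IntegrableOn (fun t => Q t z) F) ∧
    ∃ R : H →L[ℝ] H, ∀ z, R z = ∫ t in F, Q t z := by
  have hi : ∀ z, IntegrableOn (fun t => Q t z) F := fun z =>
    Measure.integrableOn_of_bounded hFfin.ne (hQ z).aestronglyMeasurable
      ((ae_restrict_iff' hF).2 (Filter.Eventually.of_forall fun t ht => hK t ht z))
  refine ⟨hi, LinearMap.mkContinuous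
    { toFun := fun z => ∫ t in F, Q t z
      map_add' := fun x y => by
        simp only [map_add]; exact integral_add (hi x) (hi y)
      map_smul' := fun r x => by
        simp only [map_smul, RingHom.id_apply]; exact integral_smul _ _ } (K * volume.real F)
    (fun x => ?_), fun z => rfl⟩
  have := norm_setIntegral_le_of_norm_le_const (f := fun t => Q t x) hFfin (fun t ht => hK t ht x)
  simp only [LinearMap.coe_mk, AddHom.coe_mk]
  linarith

/-- growing exponentials truncated at frequency `l` -/
noncomputable def cD (lam : ℕ → ℝ) (l s : ℝ) (j : ℕ) : ℝ :=
  if lam j ≤ l then Real.exp (lam j * s) else 0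

lemma cD_abs (lam : ℕ → ℝ) (hlam : ∀ j, 0 < lam j) (l s : ℝ) (j : ℕ) (hl : 0 < l) :
    |cD lam l s j| ≤ Real.exp (l * |s|) := by
  unfold cD
  split_ifs with h
  · rw [abs_of_pos (Real.exp_pos _)]
    apply Real.exp_le_exp.2
    have := hlam j
    calc lam j * s ≤ lam j * |s| := by gcongr; exact le_abs_self s
      _ ≤ l * |s| := by gcongr
  · simp [Real.exp_nonneg]

lemma cP_abs (lam : ℕ → ℝ) (l : ℝ) (j : ℕ) : |if lam j ≤ l then (1:ℝ) else 0| ≤ 1 := by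
  split_ifs <;> simp

lemma specProj_eq (e : HilbertBasis ℕ ℝ H) (lam : ℕ → ℝ) (l : ℝ) (f : H) :
    specProj e lam l f = dg e (fun j => if lam j ≤ l then 1 else 0) f := by
  unfold specProj dg
  congr 1; ext j; congr 1; by_cases h : lam j ≤ l <;> simp [h]

lemma inner_specProj (e : HilbertBasis ℕ ℝ H) (lam : ℕ → ℝ) (l : ℝ) (f : H) (j : ℕ) :
    ⟪specProj e lam l f, e j⟫ = if lam j ≤ l then ⟪f, e j⟫ else 0 := by
  rw [specProj_eq, inner_dg e (cP_abs lam l)]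
  by_cases h : lam j ≤ l <;> simp [h]

lemma gram (e : HilbertBasis ℕ ℝ H) (lam : ℕ → ℝ) (hlam : ∀ j, 0 < lam j)
    (B : H →L[ℝ] U) (l M : ℝ) (hl : 0 < l) (hM : 0 < M)
    (hspec : ∀ f : H, ‖specProj e lam l f‖ ≤ M * ‖B (specProj e lam l f)‖)
    (a b : ℝ) (F : Set ℝ) (hF : MeasurableSet F) (hFs : F ⊆ Set.Icc a b)
    (hFpos : 0 < volume.real F) (v : H) :
    ∃ z : H, ‖z‖ ≤ M ^ 2 / volume.real F * ‖v‖ ∧ ∀ j, lam j ≤ l →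
      ∫ t in F, Real.exp (lam j * (t - a)) *
        ⟪ContinuousLinearMap.adjoint B (B (dg e (cD lam l (t - a)) z)), e j⟫ = - ⟪v, e j⟫ := by
  have hFfin : volume F < ⊤ := (measure_mono hFs).trans_lt measure_Icc_lt_top
  have hb : ∀ s j, |cD lam l s j| ≤ Real.exp (l * |s|) := fun s j => cD_abs lam hlam l s j hl
  set D : ℝ → H →L[ℝ] H := fun t => dgL e (cD lam l (t - a)) _ (hb (t - a)) with hD
  have hDa : ∀ t z, D t z = dg e (cD lam l (t - a)) z := fun t z => rfl
  set Q : ℝ → H →L[ℝ] H := fun t => D t ∘L (ContinuousLinearMap.adjoint B) ∘L B ∘L D t with hQ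
  have hQa : ∀ t z, Q t z = D t (ContinuousLinearMap.adjoint B (B (D t z))) := fun t z => rfl
  have hmeas : ∀ f : ℝ → H, StronglyMeasurable f → StronglyMeasurable fun t => D t (f t) := by
    intro f hf
    refine meas_dg e (fun j => ?_) (fun t => ⟨_, hb (t - a)⟩) hf
    unfold cD
    split_ifs <;> fun_prop
  have hQm : ∀ z, StronglyMeasurable fun t => Q t z := by
    intro z
    refine hmeas _ ?_
    have h1 := hmeas (fun _ => z) stronglyMeasurable_const
    exact ((ContinuousLinearMap.adjoint B).continuous.comp B.continuous).comp_stronglyMeasurable h1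
  set K := Real.exp (l * (b - a)) with hKdef
  have hDn : ∀ t ∈ F, ∀ z, ‖D t z‖ ≤ K * ‖z‖ := by
    intro t ht z
    have ht' := hFs ht
    refine norm_dg_le e (fun j => (hb _ j).trans ?_) z
    rw [hKdef, abs_of_nonneg (by linarith [ht'.1])]
    apply Real.exp_le_exp.2
    gcongr
    exact ht'.2
  have hKpos : 0 < K := Real.exp_pos _
  have hQn : ∀ t ∈ F, ∀ z, ‖Q t z‖ ≤ K * ‖ContinuousLinearMap.adjoint B‖ * ‖B‖ * K * ‖z‖ := by
    intro t ht z
    rw [hQa]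
    calc _ ≤ K * ‖ContinuousLinearMap.adjoint B (B (D t z))‖ := hDn t ht _
      _ ≤ K * (‖ContinuousLinearMap.adjoint B‖ * (‖B‖ * (K * ‖z‖))) := by
        gcongr
        refine (ContinuousLinearMap.le_opNorm _ _).trans ?_
        gcongr
        refine (ContinuousLinearMap.le_opNorm _ _).trans ?_
        gcongr
        exact hDn t ht z
      _ = _ := by ring
  obtain ⟨hQi, R, hR⟩ := exists_intCLM Q hQm F hF hFfin _ hQn
  set P : H →L[ℝ] H := dgL e (fun j => if lam j ≤ l then (1:ℝ) else 0) 1 (cP_abs lam l) with hP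
  have hPa : ∀ z, P z = specProj e lam l z := fun z => (specProj_eq e lam l z).symm
  set G : H →L[ℝ] H := (ContinuousLinearMap.id ℝ H - P) + R with hG
  have hGa : ∀ z, G z = (z - P z) + R z := fun z => rfl
  -- quadratic form of R
  have hPD : ∀ t z, specProj e lam l (D t z) = D t z := by
    intro t z
    refine ext_coeff e fun j => ?_
    rw [inner_specProj, hDa, inner_dg e (hb _)]
    unfold cD
    split_ifs <;> simp
  have hQinner : ∀ t z, ⟪Q t z, z⟫ = ‖B (D t z)‖ ^ 2 := by
    intro t z
    rw [hQa, hDa, dg_symm e (hb _), ContinuousLinearMap.adjoint_inner_left, ← hDa,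
      real_inner_self_eq_norm_sq]
  have hRinner : ∀ z w, ⟪R z, w⟫ = ∫ t in F, ⟪Q t z, w⟫ := by
    intro z w
    rw [hR, real_inner_comm, ← integral_inner (hQi z)]
    simp only [real_inner_comm]
  have hlow : ∀ t ∈ F, ∀ z, ‖P z‖ ^ 2 / M ^ 2 ≤ ‖B (D t z)‖ ^ 2 := by
    intro t ht z
    have ht' := hFs ht
    have h1 := hspec (D t z)
    rw [hPD] at h1
    have h2 : ‖P z‖ ≤ 1 * ‖D t z‖ := by
      refine norm_le_of_coeff e zero_le_one fun j => ?_
      rw [hPa, inner_specProj, hDa, inner_dg e (hb _)]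
      unfold cD
      split_ifs with h
      · rw [abs_mul, one_mul, abs_of_pos (Real.exp_pos _)]
        have : 1 ≤ Real.exp (lam j * (t - a)) :=
          Real.one_le_exp (mul_nonneg (hlam j).le (by linarith [ht'.1]))
        nlinarith [abs_nonneg ⟪z, e j⟫]
      · simp
    rw [div_le_iff₀ (by positivity), ← mul_pow]
    refine pow_le_pow_left₀ (norm_nonneg _) ?_ 2
    linarith
  set m := volume.real F with hm
  have hRlow : ∀ z, m * (‖P z‖ ^ 2 / M ^ 2) ≤ ⟪R z, z⟫ := by
    intro z
    rw [hRinner]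
    have : ∫ t in F, (‖P z‖ ^ 2 / M ^ 2) = m * (‖P z‖ ^ 2 / M ^ 2) := by simp [hm]
    rw [← this]
    refine setIntegral_mono_on (integrableOn_const hFfin.ne) ?_ hF (fun t ht => ?_)
    · exact (hQi z).inner_const z
    · rw [hQinner]; exact hlow t ht z
  have hPP : ∀ z, ⟪z - P z, P z⟫ = 0 := by
    intro z
    have : P (z - P z) = 0 := by
      refine ext_coeff e fun j => ?_
      rw [hPa, inner_specProj, inner_sub_left, hPa, inner_specProj]
      split_ifs <;> simp
    have h2 := dg_symm e (cP_abs lam l) (z - P z) z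
    change ⟪P (z - P z), z⟫ = ⟪z - P z, P z⟫ at h2
    rw [← h2, this, inner_zero_left]
  have hnorm : ∀ z, ‖z‖ ^ 2 = ‖z - P z‖ ^ 2 + ‖P z‖ ^ 2 := by
    intro z
    have := norm_add_sq_real (z - P z) (P z)
    rw [hPP, sub_add_cancel] at this
    linarith
  have hIP : ∀ z, ⟪z - P z, z⟫ = ‖z - P z‖ ^ 2 := by
    intro z
    have : ⟪z - P z, z⟫ = ⟪z - P z, (z - P z) + P z⟫ := by rw [sub_add_cancel]
    rw [this, inner_add_right, hPP, real_inner_self_eq_norm_sq, add_zero]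
  have hcpos : 0 < min 1 (m / M ^ 2) := by positivity
  have hunit : IsUnit G := by
    refine ContinuousLinearMap.isUnit_of_forall_le_norm_inner_map G
      (c := ⟨min 1 (m / M ^ 2), hcpos.le⟩) hcpos (fun z => ?_)
    refine le_trans ?_ (le_abs_self _)
    rw [hGa, inner_add_left, hIP, hnorm]
    have h1 := hRlow z
    have h2 : min 1 (m / M ^ 2) ≤ 1 := min_le_left _ _
    have h3 : min 1 (m / M ^ 2) ≤ m / M ^ 2 := min_le_right _ _
    change (‖z - P z‖ ^ 2 + ‖P z‖ ^ 2) * min 1 (m / M ^ 2) ≤ _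
    have h4 : ‖z - P z‖ ^ 2 * min 1 (m / M ^ 2) ≤ ‖z - P z‖ ^ 2 * 1 := by gcongr
    have h5 : ‖P z‖ ^ 2 * min 1 (m / M ^ 2) ≤ ‖P z‖ ^ 2 * (m / M ^ 2) := by gcongr
    have h6 : m * (‖P z‖ ^ 2 / M ^ 2) = ‖P z‖ ^ 2 * (m / M ^ 2) := by ring
    linarith
  rw [ContinuousLinearMap.isUnit_iff_bijective] at hunit
  obtain ⟨z, hz⟩ := hunit.2 (- P v)
  rw [hGa] at hz
  have hRcoef : ∀ j, ⟪R z, e j⟫ = ∫ t in F, cD lam l (t - a) j *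
        ⟪ContinuousLinearMap.adjoint B (B (dg e (cD lam l (t - a)) z)), e j⟫ := by
    intro j
    rw [hRinner]
    congr 1; ext t
    rw [hQa, hDa, inner_dg e (hb _)]
    rfl
  have hzc : ∀ j, ⟪z, e j⟫ - ⟪P z, e j⟫ + ⟪R z, e j⟫ = - ⟪P v, e j⟫ := by
    intro j
    rw [← inner_sub_left, ← inner_add_left, hz, inner_neg_left]
  have hPz : P z = z := by
    refine ext_coeff e fun j => ?_
    have h1 := hzc j
    rw [hPa, hPa, inner_specProj, inner_specProj] at h1
    rw [hPa, inner_specProj]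
    split_ifs with h
    · rfl
    · rw [if_neg h, if_neg h, hRcoef] at h1
      simp only [cD, if_neg h, zero_mul, integral_zero] at h1
      linarith
  refine ⟨z, ?_, fun j hj => ?_⟩
  · have h1 := hRlow z
    rw [hPz] at h1 hz
    have h2 : R z = - P v := by simpa using hz
    have h3 : ⟪R z, z⟫ ≤ ‖v‖ * ‖z‖ := by
      rw [h2]
      refine (real_inner_le_norm _ _).trans ?_
      rw [norm_neg]
      gcongr
      have := norm_dg_le e (cP_abs lam l) v
      rw [one_mul] at this
      exact this
    rcases (norm_nonneg z).eq_or_lt with h0 | h0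
    · rw [← h0]; positivity
    · have h4 : m * (‖z‖ ^ 2 / M ^ 2) = (m * ‖z‖ / M ^ 2) * ‖z‖ := by ring
      have h5 : m * ‖z‖ / M ^ 2 ≤ ‖v‖ := by
        refine le_of_mul_le_mul_right ?_ h0
        linarith
      rw [div_le_iff₀ (by positivity)] at h5
      rw [div_mul_eq_mul_div, le_div_iff₀ hFpos]
      linarith
  · have h1 := hzc j
    rw [hPz, sub_self, zero_add, hRcoef, hPa, inner_specProj, if_pos hj] at h1
    simpa only [cD, if_pos hj] using h1

end aux2

section aux3
variable {H U : Type*} [NormedAddCommGroup H] [InnerProductSpace ℝ H] [CompleteSpace H]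
  [NormedAddCommGroup U] [InnerProductSpace ℝ U] [CompleteSpace U]

lemma cS_abs (lam : ℕ → ℝ) (hlam : ∀ j, 0 < lam j) {s : ℝ} (hs : 0 ≤ s) (j : ℕ) :
    |Real.exp (-(lam j) * s)| ≤ 1 := by
  rw [abs_of_pos (Real.exp_pos _)]
  apply Real.exp_le_one_iff.2
  have := mul_nonneg (hlam j).le hs
  linarith

lemma S_eq (e : HilbertBasis ℕ ℝ H) (lam : ℕ → ℝ) (s : ℝ) (v : H) :
    diagSemigroup e lam s v = dg e (fun j => Real.exp (-(lam j) * s)) v := rfl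

lemma inner_S (e : HilbertBasis ℕ ℝ H) (lam : ℕ → ℝ) (hlam : ∀ j, 0 < lam j) {s : ℝ} (hs : 0 ≤ s)
    (v : H) (j : ℕ) :
    ⟪diagSemigroup e lam s v, e j⟫ = Real.exp (-(lam j) * s) * ⟪v, e j⟫ := by
  rw [S_eq, inner_dg e (cS_abs lam hlam hs)]

lemma norm_S (e : HilbertBasis ℕ ℝ H) (lam : ℕ → ℝ) (hlam : ∀ j, 0 < lam j) {s : ℝ} (hs : 0 ≤ s)
    (v : H) : ‖diagSemigroup e lam s v‖ ≤ ‖v‖ := by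
  rw [S_eq]
  have := norm_dg_le e (cS_abs lam hlam hs) v
  linarith

lemma S_int (e : HilbertBasis ℕ ℝ H) (lam : ℕ → ℝ) (hlam : ∀ j, 0 < lam j) (T : ℝ)
    (F : Set ℝ) (hF : MeasurableSet F) (hFfin : volume F < ⊤) (hFT : ∀ t ∈ F, t ≤ T)
    (f : ℝ → H) (hf : StronglyMeasurable f) (K : ℝ) (hK : ∀ t ∈ F, ‖f t‖ ≤ K) :
    IntegrableOn (fun t => diagSemigroup e lam (T - t) (f t)) F ∧
    (∀ j, ⟪∫ t in F, diagSemigroup e lam (T - t) (f t), e j⟫ =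
      ∫ t in F, Real.exp (-(lam j) * (T - t)) * ⟪f t, e j⟫) ∧
    ‖∫ t in F, diagSemigroup e lam (T - t) (f t)‖ ≤ K * volume.real F := by
  have hn : ∀ t ∈ F, ‖diagSemigroup e lam (T - t) (f t)‖ ≤ K := fun t ht =>
    (norm_S e lam hlam (by linarith [hFT t ht]) _).trans (hK t ht)
  have hi : IntegrableOn (fun t => diagSemigroup e lam (T - t) (f t)) F := by
    have h1 : StronglyMeasurable fun t => dg e (fun j => Real.exp (-(lam j) * max (T - t) 0)) (f t) := by
      refine meas_dg e (c := fun t j => Real.exp (-(lam j) * max (T - t) 0)) (fun j => by fun_prop)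
        (fun t => ⟨1, cS_abs lam hlam (le_max_right _ _)⟩) hf
    have heq : ∀ t ∈ F, dg e (fun j => Real.exp (-(lam j) * max (T - t) 0)) (f t) =
        diagSemigroup e lam (T - t) (f t) := by
      intro t ht
      rw [max_eq_left (by linarith [hFT t ht]), S_eq]
    have h2 : IntegrableOn (fun t => dg e (fun j => Real.exp (-(lam j) * max (T - t) 0)) (f t)) F := by
      refine Measure.integrableOn_of_bounded (M := K) hFfin.ne h1.aestronglyMeasurable
        ((ae_restrict_iff' hF).2 (Filter.Eventually.of_forall fun t ht => ?_))
      rw [heq t ht]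
      exact hn t ht
    exact h2.congr_fun heq hF
  refine ⟨hi, fun j => ?_, norm_setIntegral_le_of_norm_le_const hFfin hn⟩
  rw [real_inner_comm, ← integral_inner hi]
  refine setIntegral_congr_fun hF fun t ht => ?_
  rw [real_inner_comm, inner_S e lam hlam (by linarith [hFT t ht])]

lemma ctrl_step (e : HilbertBasis ℕ ℝ H) (lam : ℕ → ℝ) (hlam : ∀ j, 0 < lam j)
    (B : H →L[ℝ] U) (l M : ℝ) (hl : 0 < l) (hM : 0 < M)
    (hspec : ∀ f : H, ‖specProj e lam l f‖ ≤ M * ‖B (specProj e lam l f)‖)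
    (a b b' : ℝ) (hab : a ≤ b) (hb : b ≤ b') (F : Set ℝ) (hF : MeasurableSet F)
    (hFs : F ⊆ Set.Icc a b) (hFpos : 0 < volume.real F) (v : H) :
    ∃ (u : ℝ → U) (w : H), StronglyMeasurable u ∧
      (∀ t ∈ F, ‖u t‖ ≤ ‖B‖ * Real.exp (l * (b - a)) * M ^ 2 / volume.real F * ‖v‖) ∧
      ‖w‖ ≤ Real.exp (-(l * (b' - b))) *
        ((1 + ‖B‖ ^ 2 * Real.exp (l * (b - a)) * M ^ 2) * ‖v‖) ∧
      ∀ T, b' ≤ T → diagSemigroup e lam (T - b') w = diagSemigroup e lam (T - a) v +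
        ∫ t in F, diagSemigroup e lam (T - t) (ContinuousLinearMap.adjoint B (u t)) := by
  have hFfin : volume F < ⊤ := (measure_mono hFs).trans_lt measure_Icc_lt_top
  obtain ⟨z, hz, hzj⟩ := gram e lam hlam B l M hl hM hspec a b F hF hFs hFpos v
  have hbd : ∀ s j, |cD lam l s j| ≤ Real.exp (l * |s|) := fun s j => cD_abs lam hlam l s j hl
  set u : ℝ → U := fun t => B (dg e (cD lam l (t - a)) z) with hu
  have hum : StronglyMeasurable u := by
    refine B.continuous.comp_stronglyMeasurable ?_
    refine meas_dg e (fun j => ?_) (fun t => ⟨_, hbd (t - a)⟩) stronglyMeasurable_const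
    unfold cD
    split_ifs <;> fun_prop
  set K := ‖B‖ * Real.exp (l * (b - a)) * M ^ 2 / volume.real F * ‖v‖ with hK
  have hub : ∀ t ∈ F, ‖u t‖ ≤ K := by
    intro t ht
    have ht' := hFs ht
    have h1 : ‖dg e (cD lam l (t - a)) z‖ ≤ Real.exp (l * (b - a)) * ‖z‖ := by
      refine norm_dg_le e (fun j => (hbd _ j).trans ?_) z
      rw [abs_of_nonneg (by linarith [ht'.1])]
      apply Real.exp_le_exp.2
      gcongr
      exact ht'.2
    calc ‖u t‖ ≤ ‖B‖ * ‖dg e (cD lam l (t - a)) z‖ := B.le_opNorm _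
      _ ≤ ‖B‖ * (Real.exp (l * (b - a)) * (M ^ 2 / volume.real F * ‖v‖)) := by
        gcongr
        refine h1.trans ?_
        gcongr
      _ = K := by rw [hK]; ring
  set f : ℝ → H := fun t => ContinuousLinearMap.adjoint B (u t) with hf
  have hfm : StronglyMeasurable f :=
    (ContinuousLinearMap.adjoint B).continuous.comp_stronglyMeasurable hum
  have hfb : ∀ t ∈ F, ‖f t‖ ≤ ‖B‖ * K := by
    intro t ht
    refine ((ContinuousLinearMap.adjoint B).le_opNorm _).trans ?_
    rw [LinearIsometryEquiv.norm_map]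
    gcongr
    exact hub t ht
  have hI := fun T (hT : b ≤ T) => S_int e lam hlam T F hF hFfin
    (fun t ht => (hFs ht).2.trans hT) f hfm _ hfb
  set v1 : H := diagSemigroup e lam (b - a) v + ∫ t in F, diagSemigroup e lam (b - t) (f t) with hv1
  have hexp : ∀ j s r, Real.exp (-(lam j) * s) * Real.exp (-(lam j) * r)
      = Real.exp (-(lam j) * (s + r)) := by
    intro j s r
    rw [← Real.exp_add]; congr 1; ring
  -- low frequencies of v1 vanish
  have hv1low : ∀ j, lam j ≤ l → ⟪v1, e j⟫ = 0 := by
    intro j hj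
    rw [hv1, inner_add_left, inner_S e lam hlam (by linarith), (hI b le_rfl).2.1]
    have h1 : ∀ t, Real.exp (-(lam j) * (b - t)) * ⟪f t, e j⟫ = Real.exp (-(lam j) * (b - a)) *
        (Real.exp (lam j * (t - a)) * ⟪f t, e j⟫) := by
      intro t
      rw [← mul_assoc, ← Real.exp_add]; congr 2; ring
    simp only [h1]
    rw [integral_const_mul, hzj j hj]
    ring
  have hv1n : ‖v1‖ ≤ (1 + ‖B‖ ^ 2 * Real.exp (l * (b - a)) * M ^ 2) * ‖v‖ := by
    refine (norm_add_le _ _).trans ?_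
    have h1 := norm_S e lam hlam (by linarith : 0 ≤ b - a) v
    have h2 := (hI b le_rfl).2.2
    have h3 : ‖B‖ * K * volume.real F = ‖B‖ ^ 2 * Real.exp (l * (b - a)) * M ^ 2 * ‖v‖ := by
      rw [hK]; field_simp
    linarith
  refine ⟨u, diagSemigroup e lam (b' - b) v1, hum, hub, ?_, fun T hT => ?_⟩
  · refine (norm_le_of_coeff e (Real.exp_pos _).le (v := v1) fun j => ?_).trans
      (mul_le_mul_of_nonneg_left hv1n (Real.exp_pos _).le)
    rw [inner_S e lam hlam (by linarith), abs_mul, abs_of_pos (Real.exp_pos _)]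
    by_cases hj : lam j ≤ l
    · simp [hv1low j hj]
    · gcongr
      have : l * (b' - b) ≤ lam j * (b' - b) :=
        mul_le_mul_of_nonneg_right (not_le.1 hj).le (by linarith)
      linarith
  · refine ext_coeff e fun j => ?_
    rw [inner_S e lam hlam (by linarith), inner_S e lam hlam (by linarith), hv1, inner_add_left,
      inner_add_left, (hI T (hb.trans hT)).2.1, (hI b le_rfl).2.1, inner_S e lam hlam (by linarith),
      inner_S e lam hlam (by linarith), ← mul_assoc, hexp, mul_add, ← mul_assoc, hexp,
      ← integral_const_mul]
    congr 1
    · congr 3; ring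
    · congr 1; ext t
      rw [← mul_assoc, hexp]; congr 3; ring

/-- one-sided density -/
lemma density (T : ℝ) (E : Set ℝ) (hE : MeasurableSet E) (hEsub : E ⊆ Set.Ioo 0 T)
    (hEpos : 0 < volume E) (θ : ℝ) (hθ : 0 < θ) (hθ1 : θ < 1) :
    ∃ t₀ L : ℝ, 0 < L ∧ L ≤ t₀ ∧ t₀ < T ∧ ∀ r, 0 < r → r ≤ L →
      θ * r / 2 ≤ volume.real (E ∩ Set.Icc (t₀ - r) (t₀ - r + θ * r)) := by
  have h1 := Besicovitch.ae_tendsto_measure_inter_div (volume : Measure ℝ) E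
  have h2 : ∀ᵐ x ∂(volume.restrict E), x ∈ E := ae_restrict_mem hE
  have : (ae (volume.restrict E)).NeBot := by
    rw [ae_neBot, Ne, Measure.restrict_eq_zero]; exact hEpos.ne'
  obtain ⟨t₀, h, ht₀⟩ := (h1.and h2).exists
  have ht := hEsub ht₀
  have hlt : ENNReal.ofReal (1 - θ / 4) < 1 := by
    rw [ENNReal.ofReal_lt_one]; linarith
  have hev := h.eventually_const_lt hlt
  rw [eventually_nhdsWithin_iff, Metric.eventually_nhds_iff] at hev
  obtain ⟨ε, hε, hev⟩ := hev
  refine ⟨t₀, min (ε / 2) t₀, lt_min (by linarith) ht.1, min_le_right _ _, ht.2, fun r hr hrL => ?_⟩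
  have hrε : r < ε := by have := hrL.trans (min_le_left _ _); linarith
  have h3 := hev (y := r) (by simpa [abs_of_pos hr] using hrε) hr
  rw [Real.volume_closedBall] at h3
  have h4 : ENNReal.ofReal ((1 - θ / 4) * (2 * r)) < volume (E ∩ Metric.closedBall t₀ r) := by
    rw [ENNReal.ofReal_mul (by linarith)]
    have h5 : ENNReal.ofReal (2 * r) ≠ 0 := by simpa using hr
    rwa [ENNReal.lt_div_iff_mul_lt (Or.inl h5) (Or.inl ENNReal.ofReal_ne_top)] at h3
  have h6 : (1 - θ / 4) * (2 * r) < volume.real (E ∩ Metric.closedBall t₀ r) := by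
    rwa [ENNReal.ofReal_lt_iff_lt_toReal (by nlinarith)] at h4
    exact ((measure_mono Set.inter_subset_right).trans_lt measure_closedBall_lt_top).ne
  have h7 : E ∩ Metric.closedBall t₀ r ⊆ (E ∩ Set.Icc (t₀ - r) (t₀ - r + θ * r)) ∪
      Set.Icc (t₀ - r + θ * r) (t₀ + r) := by
    intro x hx
    rw [Real.closedBall_eq_Icc] at hx
    rcases le_total x (t₀ - r + θ * r) with h | h
    · exact Or.inl ⟨hx.1, hx.2.1, h⟩
    · exact Or.inr ⟨h, hx.2.2⟩
  have h8 : volume.real (E ∩ Metric.closedBall t₀ r) ≤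
      volume.real (E ∩ Set.Icc (t₀ - r) (t₀ - r + θ * r)) +
      volume.real (Set.Icc (t₀ - r + θ * r) (t₀ + r)) := by
    refine (measureReal_mono h7 ?_).trans (measureReal_union_le _ _)
    refine (measure_union_lt_top ?_ measure_Icc_lt_top).ne
    exact (measure_mono Set.inter_subset_right).trans_lt measure_Icc_lt_top
  rw [Real.volume_real_Icc_of_le (by nlinarith)] at h8
  nlinarith

lemma numerics (γ N L θ C : ℝ) (hγ : γ ∈ Set.Ioo (0:ℝ) 1) (hN : 0 < N) (hL : 0 < L) (hθ : 0 < θ)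
    (p : ℕ) (hp1 : 1 ≤ p) (hp : ((p : ℝ) + 1) * γ ≤ p) (hC : 0 ≤ C) :
    ∃ A : ℝ, 0 < A ∧ ∀ k : ℕ, C + k + 2 * N * (A * (2 ^ (p + 1)) ^ k) ^ γ ≤
      θ * (A * L * (2 ^ p) ^ k) := by
  have hlim : Filter.Tendsto (fun A : ℝ => A ^ (1 - γ)) Filter.atTop Filter.atTop :=
    tendsto_rpow_atTop (by linarith [hγ.2])
  have e1 := hlim.eventually_ge_atTop ((C + 1 + 2 * N) / (θ * L))
  obtain ⟨A, hA, hA1⟩ := (e1.and (Filter.eventually_ge_atTop 1)).exists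
  have hA0 : 0 < A := by linarith
  refine ⟨A, hA0, fun k => ?_⟩
  have hAγ : 1 ≤ A ^ γ := Real.one_le_rpow hA1 hγ.1.le
  have h0 : A ^ γ * A ^ (1 - γ) = A := by
    rw [← Real.rpow_add hA0]; simp
  have hmain : (C + 1 + 2 * N) * A ^ γ ≤ θ * L * A := by
    rw [div_le_iff₀ (by positivity)] at hA
    have := mul_le_mul_of_nonneg_right hA (by positivity : 0 ≤ A ^ γ)
    calc _ ≤ _ := this
      _ = θ * L * (A ^ γ * A ^ (1 - γ)) := by ring
      _ = _ := by rw [h0]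
  set X : ℝ := (2 ^ p) ^ k with hX
  have hX1 : 1 ≤ X := one_le_pow₀ (one_le_pow₀ (by norm_num))
  have hkX : (k : ℝ) ≤ X := by
    have h1 : (k : ℝ) ≤ 2 ^ k := by exact_mod_cast Nat.lt_two_pow_self.le
    refine h1.trans (pow_le_pow_left₀ (by norm_num) ?_ k)
    calc (2:ℝ) = 2 ^ 1 := by norm_num
      _ ≤ 2 ^ p := pow_le_pow_right₀ (by norm_num) hp1
  have hpow : (A * (2 ^ (p + 1)) ^ k) ^ γ ≤ A ^ γ * X := by
    rw [Real.mul_rpow hA0.le (by positivity)]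
    gcongr
    rw [hX, ← pow_mul, ← pow_mul, ← Real.rpow_natCast, ← Real.rpow_natCast,
      ← Real.rpow_mul (by norm_num)]
    refine Real.rpow_le_rpow_of_exponent_le (by norm_num) ?_
    push_cast
    nlinarith [mul_le_mul_of_nonneg_right hp (Nat.cast_nonneg k : (0:ℝ) ≤ k)]
  have a1 : C ≤ C * (A ^ γ * X) := le_mul_of_one_le_right hC (by nlinarith)
  have a2 : (k : ℝ) ≤ A ^ γ * X := by nlinarith
  have a3 : 2 * N * (A * (2 ^ (p + 1)) ^ k) ^ γ ≤ 2 * N * (A ^ γ * X) := by gcongr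
  have a4 := mul_le_mul_of_nonneg_right hmain (by positivity : 0 ≤ X)
  calc _ ≤ C * (A ^ γ * X) + A ^ γ * X + 2 * N * (A ^ γ * X) := by linarith
    _ = (C + 1 + 2 * N) * A ^ γ * X := by ring
    _ ≤ _ := a4
    _ = _ := by ring

end aux3
theorem stmt_9 {H U : Type*} [NormedAddCommGroup H] [InnerProductSpace ℝ H] [CompleteSpace H]
    [NormedAddCommGroup U] [InnerProductSpace ℝ U] [CompleteSpace U]
    (e : HilbertBasis ℕ ℝ H) (lam : ℕ → ℝ) (hlam : ∀ j, 0 < lam j)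
    (B : H →L[ℝ] U) (N γ : ℝ) (hN : 0 < N) (hγ : γ ∈ Set.Ioo (0:ℝ) 1)
    (hspec : ∀ l > 0, ∀ f : H,
      ‖specProj e lam l f‖ ≤ N * Real.exp (N * l ^ γ) * ‖B (specProj e lam l f)‖)
    (T : ℝ) (hT : 0 < T)
    (E : Set ℝ) (hE : MeasurableSet E) (hEsub : E ⊆ Set.Ioo 0 T) (hEpos : 0 < volume E) :
    ∃ C > 0, ∀ y₀ : H, ∃ u : ℝ → U,
      AEStronglyMeasurable u (volume.restrict (Set.Ioo 0 T)) ∧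
      (∀ᵐ t ∂(volume.restrict (Set.Ioo 0 T)), ‖u t‖ ≤ C * ‖y₀‖) ∧
      diagSemigroup e lam T y₀ +
        ∫ t in Set.Ioo (0:ℝ) T,
          E.indicator
            (fun s => diagSemigroup e lam (T - s) ((ContinuousLinearMap.adjoint B) (u s))) t
        = 0 := by
  obtain ⟨p, hp1, hp⟩ : ∃ p : ℕ, 1 ≤ p ∧ ((p : ℝ) + 1) * γ ≤ p := by
    obtain ⟨n, hn⟩ := exists_nat_ge (γ / (1 - γ))
    refine ⟨n + 1, by omega, ?_⟩
    have h1 : 0 < 1 - γ := by linarith [hγ.2]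
    rw [div_le_iff₀ h1] at hn
    push_cast
    linarith
  set θ : ℝ := 1 / (16 * 2 ^ p) with hθdef
  have h2p : (1:ℝ) ≤ 2 ^ p := one_le_pow₀ (by norm_num)
  have hθ : 0 < θ := by positivity
  have hθp : θ * 2 ^ p = 1 / 16 := by rw [hθdef]; field_simp
  have hθ16 : θ ≤ 1 / 16 := by nlinarith
  obtain ⟨t₀, L, hL, hLt, htT, hdens⟩ := density T E hE hEsub hEpos θ hθ (by linarith)
  set C : ℝ := 1 + 2 * ‖B‖ * N ^ 2 / (θ * L) + ‖B‖ ^ 2 * N ^ 2 with hC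
  have hC1 : 2 * ‖B‖ * N ^ 2 / (θ * L) ≤ C := by
    have : 0 ≤ ‖B‖ ^ 2 * N ^ 2 := by positivity
    linarith
  have hC2 : 1 + ‖B‖ ^ 2 * N ^ 2 ≤ C := by
    have : 0 ≤ 2 * ‖B‖ * N ^ 2 / (θ * L) := by positivity
    linarith
  have hC0 : 0 ≤ C := by positivity
  obtain ⟨A, hA, hnum⟩ := numerics γ N L θ C hγ hN hL hθ p hp1 hp hC0
  set lk : ℕ → ℝ := fun k => A * (2 ^ (p + 1)) ^ k with hlk
  set x : ℕ → ℝ := fun k => A * L * (2 ^ p) ^ k with hx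
  set r : ℕ → ℝ := fun k => L / 2 ^ k with hr
  have hlkpos : ∀ k, 0 < lk k := fun k => by simp only [hlk]; positivity
  have hrpos : ∀ k, 0 < r k := fun k => by simp only [hr]; positivity
  have hrL : ∀ k, r k ≤ L := fun k => div_le_self hL.le (one_le_pow₀ (by norm_num))
  have hrs : ∀ k, r (k + 1) = r k / 2 := fun k => by simp only [hr, pow_succ]; field_simp
  have hlr : ∀ k, lk k * r k = x k := fun k => by
    simp only [hlk, hr, hx]
    rw [pow_succ, mul_pow]; field_simp
  have hxs : ∀ k, x (k + 1) = 2 ^ p * x k := fun k => by simp only [hx, pow_succ]; ring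
  have hxpos : ∀ k, 0 < x k := fun k => by simp only [hx]; positivity
  have hx0 : ∀ k, x 0 ≤ x k := fun k => by
    simp only [hx, pow_zero]
    gcongr
    exact one_le_pow₀ h2p
  set a : ℕ → ℝ := fun k => t₀ - r k with ha
  set b : ℕ → ℝ := fun k => a k + θ * r k with hb
  have hab : ∀ k, a k ≤ b k := fun k => by
    have := mul_pos hθ (hrpos k)
    simp only [hb]; linarith
  have hbd : ∀ k, r k / 4 ≤ a (k + 1) - b k := fun k => by
    simp only [hb, ha, hrs]
    nlinarith [hrpos k]
  have hba : ∀ k, b k < a (k + 1) := fun k => by linarith [hbd k, hrpos k]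
  set F : ℕ → Set ℝ := fun k => E ∩ Set.Icc (a k) (b k) with hF
  have hFm : ∀ k, MeasurableSet (F k) := fun k => hE.inter measurableSet_Icc
  have hFvol : ∀ k, θ * r k / 2 ≤ volume.real (F k) := fun k => hdens (r k) (hrpos k) (hrL k)
  have hFpos : ∀ k, 0 < volume.real (F k) := fun k =>
    lt_of_lt_of_le (by have := mul_pos hθ (hrpos k); linarith) (hFvol k)
  set M : ℕ → ℝ := fun k => N * Real.exp (N * lk k ^ γ) with hM
  have hMpos : ∀ k, 0 < M k := fun k => by simp only [hM]; positivity
  have hM2 : ∀ k, Real.exp (lk k * (b k - a k)) * M k ^ 2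
      = N ^ 2 * Real.exp (2 * N * lk k ^ γ + θ * x k) := fun k => by
    have h1 : lk k * (b k - a k) = θ * x k := by rw [← hlr]; simp only [hb]; ring
    rw [h1]
    simp only [hM]
    have h2 : Real.exp (N * lk k ^ γ) ^ 2 = Real.exp (2 * N * lk k ^ γ) := by
      rw [← Real.exp_nat_mul]; congr 1; push_cast; ring
    rw [mul_pow, h2, Real.exp_add]
    ring
  have hbig : ∀ k : ℕ, C * 2 ^ k * Real.exp (2 * N * lk k ^ γ + θ * x k) ≤ Real.exp (2 * θ * x k) := by
    intro k
    have h1 : C ≤ Real.exp C := by linarith [Real.add_one_le_exp C]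
    have h2 : (2:ℝ) ^ k ≤ Real.exp k := by
      rw [← Real.exp_one_pow]
      exact pow_le_pow_left₀ (by norm_num) (by linarith [Real.add_one_le_exp 1]) k
    calc _ ≤ Real.exp C * Real.exp k * Real.exp (2 * N * lk k ^ γ + θ * x k) := by gcongr
      _ = Real.exp (C + k + (2 * N * lk k ^ γ + θ * x k)) := by rw [Real.exp_add (C + k), Real.exp_add C]
      _ ≤ _ := by
        apply Real.exp_le_exp.2
        have := hnum k
        change C + k + 2 * N * lk k ^ γ ≤ θ * x k at this
        linarith
  have hK1 : ∀ k, ‖B‖ * Real.exp (lk k * (b k - a k)) * M k ^ 2 / volume.real (F k)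
      ≤ Real.exp (2 * θ * x k) := by
    intro k
    refine le_trans ?_ (hbig k)
    rw [mul_assoc, hM2]
    set X := Real.exp (2 * N * lk k ^ γ + θ * x k) with hX
    have hXp : 0 < X := Real.exp_pos _
    have hrk := hrpos k
    calc _ ≤ ‖B‖ * (N ^ 2 * X) / (θ * r k / 2) := by
          gcongr
          exact hFvol k
      _ = 2 * ‖B‖ * N ^ 2 / (θ * L) * 2 ^ k * X := by
          simp only [hr]; field_simp
      _ ≤ _ := by gcongr
  have hK2 : ∀ k, 1 + ‖B‖ ^ 2 * Real.exp (lk k * (b k - a k)) * M k ^ 2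
      ≤ Real.exp (2 * θ * x k) := by
    intro k
    refine le_trans ?_ (hbig k)
    rw [mul_assoc, hM2]
    set X := Real.exp (2 * N * lk k ^ γ + θ * x k) with hX
    have hXp : 1 ≤ X := by
      apply Real.one_le_exp
      have := hxpos k
      have := Real.rpow_nonneg (hlkpos k).le γ
      positivity
    have h2k : (1:ℝ) ≤ 2 ^ k := one_le_pow₀ (by norm_num)
    calc _ ≤ (1 + ‖B‖ ^ 2 * N ^ 2) * X := by nlinarith
      _ ≤ C * X := by gcongr
      _ ≤ C * 2 ^ k * X := by
        gcongr
        exact le_mul_of_one_le_right hC0 h2k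
  have hstep := fun k v => ctrl_step e lam hlam B (lk k) (M k) (hlkpos k) (hMpos k)
    (hspec (lk k) (hlkpos k)) (a k) (b k) (a (k + 1)) (hab k) (hba k).le (F k) (hFm k)
    Set.inter_subset_right (hFpos k) v
  choose uu ww huum huub hww hid using hstep
  refine ⟨1 + Real.exp (2 * θ * x 0), by positivity, fun y₀ => ?_⟩
  set v : ℕ → H := fun k => Nat.rec (diagSemigroup e lam (a 0) y₀) (fun k w => ww k w) k with hv
  have hvs : ∀ k, v (k + 1) = ww k (v k) := fun k => rfl
  have ha0 : 0 ≤ a 0 := by simp only [ha, hr, pow_zero, div_one]; linarith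
  have hv0 : ‖v 0‖ ≤ ‖y₀‖ := norm_S e lam hlam ha0 y₀
  have hdecay : ∀ k, ‖v (k + 1)‖ ≤ Real.exp (-(x k / 8)) * ‖v k‖ := by
    intro k
    rw [hvs]
    refine (hww k (v k)).trans ?_
    have h1 : Real.exp (-(lk k * (a (k + 1) - b k))) ≤ Real.exp (-(x k / 4)) := by
      apply Real.exp_le_exp.2
      have := mul_le_mul_of_nonneg_left (hbd k) (hlkpos k).le
      have := hlr k
      linarith
    have h2 : Real.exp (2 * θ * x k) ≤ Real.exp (x k / 8) := by
      apply Real.exp_le_exp.2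
      nlinarith [hxpos k]
    calc _ ≤ Real.exp (-(x k / 4)) * (Real.exp (x k / 8) * ‖v k‖) := by
          gcongr
          exact (hK2 k).trans h2
      _ = _ := by
        rw [← mul_assoc, ← Real.exp_add]; congr 2; ring
  have hvle : ∀ k, ‖v k‖ ≤ ‖y₀‖ := by
    intro k
    induction k with
    | zero => exact hv0
    | succ k ih =>
      refine (hdecay k).trans (le_trans ?_ ih)
      refine mul_le_of_le_one_left (norm_nonneg _) (Real.exp_le_one_iff.2 ?_)
      linarith [hxpos k]
  have huk : ∀ k, ∀ t ∈ F k, ‖uu k (v k) t‖ ≤ (1 + Real.exp (2 * θ * x 0)) * ‖y₀‖ := by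
    intro k t ht
    have h1 : ‖uu k (v k) t‖ ≤ Real.exp (2 * θ * x k) * ‖v k‖ :=
      (huub k (v k) t ht).trans (mul_le_mul_of_nonneg_right (hK1 k) (norm_nonneg _))
    have h0 := norm_nonneg y₀
    have h3 := Real.exp_pos (2 * θ * x 0)
    cases k with
    | zero =>
      refine h1.trans ?_
      have := mul_le_mul_of_nonneg_left hv0 h3.le
      linarith
    | succ k =>
      have h4 : Real.exp (2 * θ * x (k + 1)) * Real.exp (-(x k / 8)) = 1 := by
        rw [← Real.exp_add, Real.exp_eq_one_iff, hxs]
        linear_combination 2 * x k * hθp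
      have h5 : Real.exp (2 * θ * x (k + 1)) * ‖v (k + 1)‖ ≤ ‖v k‖ := by
        calc _ ≤ Real.exp (2 * θ * x (k + 1)) * (Real.exp (-(x k / 8)) * ‖v k‖) := by
              gcongr
              exact hdecay k
          _ = ‖v k‖ := by rw [← mul_assoc, h4, one_mul]
      have := hvle k
      nlinarith
  -- limits
  have hvlim : Filter.Tendsto (fun k => ‖v k‖) Filter.atTop (nhds 0) := by
    have hq : Real.exp (-(x 0 / 8)) < 1 := by
      apply Real.exp_lt_one_iff.2; linarith [hxpos 0]
    have hg : ∀ k, ‖v k‖ ≤ Real.exp (-(x 0 / 8)) ^ k * ‖y₀‖ := by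
      intro k
      induction k with
      | zero => simpa using hv0
      | succ k ih =>
        calc _ ≤ _ := hdecay k
          _ ≤ Real.exp (-(x 0 / 8)) * (Real.exp (-(x 0 / 8)) ^ k * ‖y₀‖) := by
            gcongr
            exact hx0 k
          _ = _ := by ring
    refine squeeze_zero (fun _ => norm_nonneg _) hg ?_
    have := (tendsto_pow_atTop_nhds_zero_of_lt_one (Real.exp_pos _).le hq).mul_const ‖y₀‖
    simpa using this
  -- disjointness
  have hamono : Monotone a := monotone_nat_of_le_succ fun k => (hab k).trans (hba k).le
  have hdisj' : ∀ i j, i < j → Disjoint (F i) (F j) := by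
    intro i j hij
    rw [Set.disjoint_left]
    intro t hi hj
    have h1 : a (i + 1) ≤ a j := hamono hij
    have := hi.2.2
    have := hj.2.1
    linarith [hba i]
  have hdisj : Pairwise (Function.onFun Disjoint F) := by
    intro i j hij
    rcases lt_or_gt_of_ne hij with h | h
    · exact hdisj' i j h
    · exact (hdisj' j i h).symm
  set u : ℝ → U := fun t => ∑' k, (F k).indicator (uu k (v k)) t with hu
  have huF : ∀ k, ∀ t ∈ F k, ∀ i, i ≠ k → (F i).indicator (uu i (v i)) t = 0 := by
    intro k t ht i hik
    refine Set.indicator_of_notMem (fun hti => ?_) _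
    exact Set.disjoint_left.1 (hdisj hik) hti ht
  have hueq : ∀ k, ∀ t ∈ F k, u t = uu k (v k) t := by
    intro k t ht
    simp only [hu]
    rw [tsum_eq_single k (huF k t ht), Set.indicator_of_mem ht]
  have hu0 : ∀ t, t ∉ (⋃ k, F k) → u t = 0 := by
    intro t ht
    have : ∀ k, (F k).indicator (uu k (v k)) t = 0 := fun k =>
      Set.indicator_of_notMem (fun h => ht (Set.mem_iUnion.2 ⟨k, h⟩)) _
    simp only [hu, this, tsum_zero]
  have hsum : ∀ t, Summable fun k => (F k).indicator (uu k (v k)) t := by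
    intro t
    by_cases ht : t ∈ ⋃ k, F k
    · obtain ⟨k, hk⟩ := Set.mem_iUnion.1 ht
      exact (hasSum_single k (huF k t hk)).summable
    · have : ∀ k, (F k).indicator (uu k (v k)) t = 0 := fun k =>
        Set.indicator_of_notMem (fun h => ht (Set.mem_iUnion.2 ⟨k, h⟩)) _
      simp only [this]
      exact summable_zero
  have hum : StronglyMeasurable u := by
    refine stronglyMeasurable_of_tendsto Filter.atTop
      (f := fun n t => ∑ k ∈ Finset.range n, (F k).indicator (uu k (v k)) t) (fun n => ?_) ?_
    · exact Finset.stronglyMeasurable_fun_sum _ (fun k _ => (huum k (v k)).indicator (hFm k))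
    · rw [tendsto_pi_nhds]
      exact fun t => (hsum t).hasSum.tendsto_sum_nat
  have hub : ∀ t, ‖u t‖ ≤ (1 + Real.exp (2 * θ * x 0)) * ‖y₀‖ := by
    intro t
    by_cases ht : t ∈ ⋃ k, F k
    · obtain ⟨k, hk⟩ := Set.mem_iUnion.1 ht
      rw [hueq k t hk]
      exact huk k t hk
    · rw [hu0 t ht, norm_zero]; positivity
  refine ⟨u, hum.aestronglyMeasurable, Filter.Eventually.of_forall hub, ?_⟩
  set f : ℝ → H := fun t => ContinuousLinearMap.adjoint B (u t) with hf
  set φ : ℝ → H := fun t => diagSemigroup e lam (T - t) (f t) with hφ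
  have hUE : (⋃ k, F k) ⊆ E := Set.iUnion_subset fun k => Set.inter_subset_left
  have hUm : MeasurableSet (⋃ k, F k) := MeasurableSet.iUnion hFm
  have hfin : volume (⋃ k, F k) < ⊤ :=
    (measure_mono (hUE.trans hEsub)).trans_lt measure_Ioo_lt_top
  have hφi : IntegrableOn φ (⋃ k, F k) := by
    refine (S_int e lam hlam T _ hUm hfin (fun t ht => (hEsub (hUE ht)).2.le) f ?_
      (‖ContinuousLinearMap.adjoint B‖ * ((1 + Real.exp (2 * θ * x 0)) * ‖y₀‖)) ?_).1
    · exact (ContinuousLinearMap.adjoint B).continuous.comp_stronglyMeasurable hum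
    · intro t _
      refine (ContinuousLinearMap.le_opNorm _ _).trans ?_
      gcongr
      exact hub t
  have hintegral : ∫ t in Set.Ioo (0:ℝ) T, E.indicator φ t = ∫ t in ⋃ k, F k, φ t := by
    rw [← integral_indicator measurableSet_Ioo, ← integral_indicator hUm]
    congr 1; ext t
    by_cases ht : t ∈ ⋃ k, F k
    · rw [Set.indicator_of_mem ht, Set.indicator_of_mem (hEsub (hUE ht)),
        Set.indicator_of_mem (hUE ht)]
    · rw [Set.indicator_of_notMem ht]
      have h0 : φ t = 0 := by
        simp only [hφ, hf, hu0 t ht, map_zero, diagSemigroup, inner_zero_left, mul_zero, zero_smul,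
          tsum_zero]
      have h1 : E.indicator φ t = 0 := by
        by_cases hh : t ∈ E
        · rw [Set.indicator_of_mem hh, h0]
        · rw [Set.indicator_of_notMem hh]
      by_cases hh : t ∈ Set.Ioo 0 T
      · rw [Set.indicator_of_mem hh, h1]
      · rw [Set.indicator_of_notMem hh]
  have haT : ∀ k, a k ≤ T := fun k => by
    have := hrpos k
    simp only [ha]; linarith
  have hpart : ∀ n, diagSemigroup e lam T y₀ + ∑ k ∈ Finset.range n, ∫ t in F k, φ t =
      diagSemigroup e lam (T - a n) (v n) := by
    intro n
    induction n with
    | zero =>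
      simp only [Finset.range_zero, Finset.sum_empty, add_zero]
      refine ext_coeff e fun j => ?_
      have hT0 := haT 0
      change _ = ⟪diagSemigroup e lam (T - a 0) (diagSemigroup e lam (a 0) y₀), e j⟫
      rw [inner_S e lam hlam hT.le, inner_S e lam hlam (by linarith), inner_S e lam hlam ha0,
        ← mul_assoc, ← Real.exp_add]
      congr 2; ring
    | succ n ih =>
      rw [Finset.sum_range_succ, ← add_assoc, ih, hvs, hid n (v n) T (haT _)]
      congr 1
      refine setIntegral_congr_fun (hFm n) fun t ht => ?_
      simp only [hφ, hf, hueq n t ht]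
  change diagSemigroup e lam T y₀ + ∫ t in Set.Ioo (0:ℝ) T, E.indicator φ t = 0
  rw [hintegral]
  have hs := (hasSum_integral_iUnion hFm hdisj hφi).tendsto_sum_nat.const_add
    (diagSemigroup e lam T y₀)
  simp only [hpart] at hs
  refine tendsto_nhds_unique hs ?_
  refine squeeze_zero_norm (fun k => norm_S e lam hlam (by linarith [haT k]) (v k)) hvlim
end

section
/- Let x₀ ∈ (0,1) and R ∈ (0,1] satisfy (x₀ − 4R, x₀ + 4R) ⊆ (0,1), let G ⊆ (x₀ − R, x₀ + R) be a Lebesgue measurable set with |G| > 0, let T > 0, and let E ⊆ (0,T) be a Lebesgue measurable set with |E| > 0. Then there exists a constant C > 0 such that for every square-summable real sequence (a_j)_{j≥1}, the function z(t,x) := Σ_{j≥1} a_j e^{−j²π²(T−t)} sin(jπx) satisfies ( ∫_0^1 z(0,x)² dx )^{1/2} ≤ C ∫_E ( ∫_G z(t,x)² dx )^{1/2} dt. -/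
open MeasureTheory Real

lemma obs_exists_sep (δ : ℝ) (hδ : 0 < δ) : ∀ (n : ℕ) (A : Set ℝ), BddBelow A →
    ENNReal.ofReal (n * δ) < volume A →
    ∃ p : ℕ → ℝ, (∀ k ≤ n, p k ∈ A) ∧ (∀ k < n, p k + δ ≤ p (k+1)) := by
  intro n
  induction n with
  | zero =>
    intro A _ hA
    have hne : A.Nonempty := by
      rw [Set.nonempty_iff_ne_empty]; rintro rfl; simp at hA
    obtain ⟨x, hx⟩ := hne
    exact ⟨fun _ => x, fun _ _ => hx, fun k hk => by omega⟩
  | succ n ih =>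
    intro A hb hA
    have hne : A.Nonempty := by
      rw [Set.nonempty_iff_ne_empty]; rintro rfl; simp at hA
    obtain ⟨v, hv1, hv2⟩ := exists_between hA
    have hvt : v ≠ ⊤ := (lt_of_lt_of_le hv2 le_top).ne
    have hvr : ((n:ℝ)+1) * δ < v.toReal := by
      have := (ENNReal.ofReal_lt_iff_lt_toReal (by positivity) hvt).1 hv1
      simpa using this
    set ε := v.toReal - (n+1) * δ with hε
    have hεpos : 0 < ε := by linarith
    obtain ⟨p0, hp0, hp0'⟩ := exists_lt_of_csInf_lt hne (show sInf A < sInf A + ε by linarith)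
    have hA' : ENNReal.ofReal (n * δ) < volume (A ∩ Set.Ici (p0 + δ)) := by
      by_contra! hcon
      have hsub : A ⊆ (A ∩ Set.Ici (p0 + δ)) ∪ Set.Ico (sInf A) (p0 + δ) := by
        intro x hx
        by_cases h : p0 + δ ≤ x
        · exact Or.inl ⟨hx, h⟩
        · exact Or.inr ⟨csInf_le hb hx, not_le.1 h⟩
      have h1 : volume A ≤ ENNReal.ofReal (n * δ) + ENNReal.ofReal (p0 + δ - sInf A) := by
        refine (measure_mono hsub).trans ((measure_union_le _ _).trans ?_)
        rw [Real.volume_Ico]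
        gcongr
      have h0 : sInf A ≤ p0 := csInf_le hb hp0
      rw [← ENNReal.ofReal_add (by positivity) (by linarith)] at h1
      have h2 := hv2.trans_le h1
      have h3 := (ENNReal.lt_ofReal_iff_toReal_lt hvt).1 h2
      linarith
    obtain ⟨p, hp1, hp2⟩ := ih _ (hb.mono Set.inter_subset_left) hA'
    refine ⟨fun k => Nat.casesOn k p0 p, ?_, ?_⟩
    · intro k hk
      cases k with
      | zero => exact hp0
      | succ k => exact (hp1 k (by omega)).1
    · intro k hk
      cases k with
      | zero => exact (hp1 0 (by omega)).2
      | succ k => exact hp2 k (by omega)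

lemma obs_sep_dist (δ : ℝ) (n : ℕ) (p : ℕ → ℝ)
    (hp : ∀ k < n, p k + δ ≤ p (k+1)) (k d : ℕ) (h : k + d ≤ n) : p k + d * δ ≤ p (k + d) := by
  induction d with
  | zero => simp
  | succ d ih =>
    have h1 := ih (by omega)
    have h2 := hp (k+d) (by omega)
    rw [← add_assoc]
    push_cast
    linarith

lemma obs_prod (c : ℝ) (hc : 0 ≤ c) (k : ℕ) (q : ℕ → ℝ) (m : ℕ)
    (hq : ∀ l ≤ k + m, c * |(k:ℝ) - l| ≤ q l) :
    c ^ (k + m) * (k.factorial * m.factorial) ≤ ∏ l ∈ (Finset.range (k + m + 1)).erase k, q l := by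
  have key : ∀ (l : ℕ), l ∈ (Finset.range (k+m+1)).erase k → c * |(k:ℝ) - l| ≤ q l := by
    intro l hl
    simp at hl
    exact hq l (by omega)
  refine le_trans (le_of_eq ?_) (Finset.prod_le_prod (fun l _ => by positivity) key)
  clear hq key
  induction m with
  | zero =>
    simp only [add_zero, Nat.factorial_zero, Nat.cast_one, mul_one]
    rw [Finset.range_add_one, Finset.erase_insert (by simp), Finset.prod_mul_distrib]
    simp only [Finset.prod_const, Finset.card_range]
    congr 1
    rw [← Finset.prod_range_add_one_eq_factorial, ← Finset.prod_range_reflect]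
    push_cast
    refine Finset.prod_congr rfl fun l hl => ?_
    have : l < k := by simpa using hl
    rw [abs_of_nonneg (by rw [sub_nonneg]; exact_mod_cast this.le)]
    rw [Nat.cast_sub (by omega), Nat.cast_sub (by omega)]; push_cast; ring
  | succ m ih =>
    rw [Finset.range_add_one, Finset.erase_insert_of_ne (by omega), Finset.prod_insert (by simp), ← add_assoc,
      ← ih]
    have : |(k:ℝ) - ((k+m+1 : ℕ):ℝ)| = m + 1 := by
      push_cast
      rw [show (k:ℝ) - (k+m+1) = -(m+1) by ring, abs_neg, abs_of_nonneg (by positivity)]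
    rw [this, Nat.factorial_succ]
    push_cast
    ring

open Polynomial in
lemma obs_coeff (s : Finset ℕ) (w : ℕ → ℂ) (d : ℕ → ℂ) (hw : ∀ i, ‖w i‖ ≤ 1) (i : ℕ) :
    ‖(∏ l ∈ s, (C (d l) * (X - C (w l)))).coeff i‖ ≤ 2 ^ s.card * ∏ l ∈ s, ‖d l‖ := by
  induction s using Finset.induction_on generalizing i with
  | empty =>
    simp only [Finset.prod_empty, coeff_one]
    split_ifs <;> simp
  | insert l s hl ih =>
    rw [Finset.prod_insert hl, Finset.prod_insert hl, Finset.card_insert_of_notMem hl, mul_assoc,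
      coeff_C_mul, sub_mul, coeff_sub, coeff_C_mul, norm_mul]
    set Q := ∏ l ∈ s, (C (d l) * (X - C (w l)))
    have h1 : ‖(X * Q).coeff i‖ ≤ 2 ^ s.card * ∏ l ∈ s, ‖d l‖ := by
      cases i with
      | zero => simp; positivity
      | succ i => rw [coeff_X_mul]; exact ih i
    have h2 : ‖w l * Q.coeff i‖ ≤ 2 ^ s.card * ∏ l ∈ s, ‖d l‖ := by
      rw [norm_mul]
      calc _ ≤ 1 * ‖Q.coeff i‖ := by gcongr; exact hw l
        _ ≤ _ := by rw [one_mul]; exact ih i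
    calc _ ≤ ‖d l‖ * (2 ^ s.card * ∏ l ∈ s, ‖d l‖ + 2 ^ s.card * ∏ l ∈ s, ‖d l‖) := by
          gcongr
          exact (norm_sub_le _ _).trans (add_le_add h1 h2)
      _ = _ := by ring

lemma obs_norm_sub (x y : ℝ) (h : |x - y| ≤ 1) :
    2 * |x - y| ≤ ‖Complex.exp (Complex.I * ((π * x : ℝ) : ℂ)) - Complex.exp (Complex.I * ((π * y : ℝ) : ℂ))‖ := by
  have h1 : Complex.exp (Complex.I * ((π * x : ℝ) : ℂ)) - Complex.exp (Complex.I * ((π * y : ℝ) : ℂ))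
      = Complex.exp (Complex.I * ((π * y : ℝ) : ℂ)) *
        (Complex.exp (Complex.I * ((π * (x - y) : ℝ) : ℂ)) - 1) := by
    rw [mul_sub, ← Complex.exp_add]
    push_cast
    ring_nf
  rw [h1, norm_mul, Complex.norm_exp_I_mul_ofReal_sub_one]
  have h2 : ‖Complex.exp (Complex.I * ((π * y : ℝ) : ℂ))‖ = 1 := by
    rw [mul_comm]; exact Complex.norm_exp_ofReal_mul_I _
  rw [h2, one_mul, norm_mul, Real.norm_eq_abs, Real.norm_eq_abs, abs_of_pos (by norm_num : (0:ℝ) < 2)]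
  have h3 : 2 / π * (π * |x - y| / 2) ≤ sin (π * |x - y| / 2) := by
    apply Real.mul_le_sin (by positivity)
    have := Real.pi_pos
    nlinarith
  have h4 : 2 / π * (π * |x - y| / 2) = |x - y| := by
    field_simp
  have h5 : sin (π * |x - y| / 2) ≤ |sin (π * (x - y) / 2)| := by
    rcases abs_cases (x - y) with ⟨h, _⟩ | ⟨h, _⟩
    · rw [h]; exact le_abs_self _
    · rw [h, mul_neg, neg_div, Real.sin_neg]; exact neg_le_abs _
  linarith

open Polynomial in
/-- coefficients of a polynomial of degree at most `n`, controlled by its values at separated points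
of the circle -/
lemma obs_coeff_bound (n : ℕ) (P : ℂ[X]) (hP : P.degree < ((n + 1 : ℕ) : WithBot ℕ)) (m : ℝ) (hm : 0 < m)
    (A : Set ℝ) (hA : A ⊆ Set.Ioo 0 1) (hAm : ENNReal.ofReal m ≤ volume A) (M : ℝ)
    (hM : ∀ x ∈ A, ‖P.eval (Complex.exp (Complex.I * ((π * x : ℝ) : ℂ)))‖ ≤ M) (i : ℕ) :
    ‖P.coeff i‖ ≤ (n + 1) * (M * ((2 / m) ^ n * exp (n + 1))) := by
  set δ : ℝ := m / (n + 1) with hδ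
  have hδpos : 0 < δ := by positivity
  have hlt : ENNReal.ofReal (n * δ) < volume A := by
    refine lt_of_lt_of_le ?_ hAm
    rw [ENNReal.ofReal_lt_ofReal_iff hm, hδ]
    rw [← mul_div_assoc, div_lt_iff₀ (by positivity)]
    nlinarith
  obtain ⟨p, hp1, hp2⟩ := obs_exists_sep δ hδpos n A ⟨0, fun x hx => (hA hx).1.le⟩ hlt
  have hM0 : 0 ≤ M := (norm_nonneg _).trans (hM _ (hp1 0 (by omega)))
  set w : ℕ → ℂ := fun k => Complex.exp (Complex.I * ((π * p k : ℝ) : ℂ)) with hw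
  have hw1 : ∀ k, ‖w k‖ ≤ 1 := fun k => by
    simp only [hw]; rw [mul_comm]; exact (Complex.norm_exp_ofReal_mul_I _).le
  have hsep : ∀ k ≤ n, ∀ l ≤ n, (2 * δ) * |(k:ℝ) - l| ≤ ‖w k - w l‖ := by
    intro k hk l hl
    have h1 : |p k - p l| ≤ 1 := by
      have a1 := hA (hp1 k hk)
      have a2 := hA (hp1 l hl)
      rw [abs_le]; constructor <;> linarith [a1.1, a1.2, a2.1, a2.2]
    refine le_trans ?_ (obs_norm_sub (p k) (p l) h1)
    have h2 : |(k:ℝ) - l| * δ ≤ |p k - p l| := by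
      rcases le_total k l with h | h
      · obtain ⟨d, rfl⟩ := Nat.exists_eq_add_of_le h
        have := obs_sep_dist δ n p hp2 k d hl
        rw [abs_sub_comm, abs_sub_comm (p k)]
        push_cast
        rw [add_sub_cancel_left, abs_of_nonneg (by positivity)]
        exact le_trans (by linarith) (le_abs_self _)
      · obtain ⟨d, rfl⟩ := Nat.exists_eq_add_of_le h
        have := obs_sep_dist δ n p hp2 l d hk
        push_cast
        rw [add_sub_cancel_left, abs_of_nonneg (by positivity)]
        exact le_trans (by linarith) (le_abs_self _)
    linarith
  have hinj : Set.InjOn w (Finset.range (n+1) : Finset ℕ) := by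
    intro k hk l hl hkl
    simp only [Finset.coe_range, Set.mem_Iio] at hk hl
    have := hsep k (by omega) l (by omega)
    rw [hkl, sub_self, norm_zero] at this
    have h0 : |(k:ℝ) - l| ≤ 0 := by
      by_contra! hc
      have : 0 < 2 * δ * |(k:ℝ) - l| := by positivity
      linarith
    have h3 := abs_nonpos_iff.1 h0
    exact_mod_cast sub_eq_zero.1 h3
  have hb : ∀ k ∈ Finset.range (n+1), ‖(Lagrange.basis (Finset.range (n+1)) w k).coeff i‖ ≤
      (2 / m) ^ n * exp (n + 1) := by
    intro k hk
    have hk' : k ≤ n := by simpa [Nat.lt_succ_iff] using hk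
    obtain ⟨d, rfl⟩ := Nat.exists_eq_add_of_le hk'
    have h1 := obs_coeff ((Finset.range (k + d + 1)).erase k) w (fun l => (w k - w l)⁻¹) hw1 i
    have h2 := obs_prod (2 * δ) (by positivity) k (fun l => ‖w k - w l‖) d
      (fun l hl => hsep k hk' l hl)
    rw [Finset.card_erase_of_mem hk, Finset.card_range, Nat.add_sub_cancel] at h1
    refine h1.trans ?_
    simp only [norm_inv, Finset.prod_inv_distrib]
    have h3 : (∏ l ∈ (Finset.range (k + d + 1)).erase k, ‖w k - w l‖)⁻¹ ≤
      ((2 * δ) ^ (k + d) * (k.factorial * d.factorial))⁻¹ := by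
      gcongr
    have h4 : ((k+d).factorial : ℝ) ≤ 2 ^ (k+d) * (k.factorial * d.factorial) := by
      have := Nat.add_choose_mul_factorial_mul_factorial k d
      have h5 := Nat.choose_le_two_pow (k+d) d
      have : (k+d).factorial ≤ 2 ^ (k+d) * (k.factorial * d.factorial) := by
        rw [← this, mul_assoc]; gcongr
      exact_mod_cast this
    have h6 : (((k + d : ℕ):ℝ)+1) ^ (k+d) ≤ (k+d).factorial * exp (((k + d : ℕ):ℝ)+1) := by
      have := Real.pow_div_factorial_le_exp (x := ((k + d : ℕ):ℝ)+1) (by positivity) (k+d)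
      rw [div_le_iff₀ (by positivity)] at this
      linarith
    calc _ ≤ 2 ^ (k+d) * ((2 * δ) ^ (k + d) * (k.factorial * d.factorial))⁻¹ := by gcongr
      _ ≤ _ := by
        rw [← div_eq_mul_inv, div_le_iff₀ (by positivity), hδ]
        have e : (2 / m) ^ (k+d) * exp (((k+d:ℕ):ℝ) + 1) * ((2 * (m / (((k+d:ℕ):ℝ) + 1))) ^ (k + d) * (k.factorial * d.factorial)) =
          2 ^ (k+d) * ((2 ^ (k+d) * (k.factorial * d.factorial) * exp (((k+d:ℕ):ℝ) + 1)) / (((k+d:ℕ):ℝ)+1) ^ (k+d)) := by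
          simp only [mul_pow, div_pow]
          field_simp
        rw [e]
        apply le_mul_of_one_le_right (by positivity)
        rw [one_le_div (by positivity)]
        exact h6.trans (by gcongr)
  have hPe := Lagrange.eq_interpolate hinj (f := P) (by simpa using hP)
  rw [hPe, Lagrange.interpolate_apply, Polynomial.finsetSum_coeff]
  calc _ ≤ ∑ k ∈ Finset.range (n+1), M * ((2 / m) ^ n * exp (n + 1)) := by
        refine norm_sum_le_of_le _ fun k hk => ?_
        rw [coeff_C_mul, norm_mul]
        have hk' : k ≤ n := by simpa [Nat.lt_succ_iff] using hk
        exact mul_le_mul (hM _ (hp1 k hk')) (hb k hk) (norm_nonneg _) hM0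
    _ = _ := by simp

open Polynomial in
lemma obs_spectral (m : ℝ) (hm : 0 < m) : ∃ K > 0, ∀ (N : ℕ) (b : ℕ → ℝ)
    (A : Set ℝ), A ⊆ Set.Ioo 0 1 → ENNReal.ofReal m ≤ volume A → ∀ M : ℝ, 
    (∀ x ∈ A, |∑ j ∈ Finset.range (N + 1), b j * sin (j * π * x)| ≤ M) →
    ∑ j ∈ Finset.Ioc 0 N, |b j| ≤ exp (K * (N + 1)) * M := by
  refine ⟨6 + 2 * |log (2 / m)|, by positivity, ?_⟩
  intro N b A hA hAm M hM
  have hne : A.Nonempty := by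
    rw [Set.nonempty_iff_ne_empty]; rintro rfl; simp at hAm; linarith
  have hM0 : 0 ≤ M := by
    obtain ⟨x, hx⟩ := hne
    exact (abs_nonneg _).trans (hM x hx)
  set P : ℂ[X] := ∑ j ∈ Finset.range (N + 1), C ((b j : ℂ) / (2 * Complex.I)) * (X ^ (N + j) - X ^ (N - j)) with hPdef
  have hdeg : P.degree < ((2 * N + 1 : ℕ) : WithBot ℕ) := by
    refine lt_of_le_of_lt (degree_sum_le _ _) ?_
    rw [Finset.sup_lt_iff (WithBot.bot_lt_coe _)]
    intro j hj
    have hj' : j ≤ N := by simpa [Nat.lt_succ_iff] using hj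
    rw [← smul_eq_C_mul]
    refine lt_of_le_of_lt (degree_smul_le _ _) ?_
    refine lt_of_le_of_lt (degree_sub_le _ _) ?_
    rw [degree_X_pow, degree_X_pow, max_lt_iff]
    constructor
    · exact_mod_cast (by omega : N + j < 2 * N + 1)
    · exact_mod_cast (by omega : N - j < 2 * N + 1)
  have hev : ∀ x : ℝ, P.eval (Complex.exp (Complex.I * ((π * x : ℝ) : ℂ))) =
      (Complex.exp (Complex.I * ((π * x : ℝ) : ℂ))) ^ N * ((∑ j ∈ Finset.range (N + 1), b j * sin (j * π * x) : ℝ) : ℂ) := by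
    intro x
    rw [hPdef, eval_finsetSum]
    push_cast
    rw [Finset.mul_sum]
    refine Finset.sum_congr rfl fun j hj => ?_
    have hj' : j ≤ N := by simpa [Nat.lt_succ_iff] using hj
    simp only [eval_mul, eval_C, eval_sub, eval_pow, eval_X]
    set v : ℂ := Complex.I * (π * x) with hv
    have e1 : Complex.sin (j * π * x) = (Complex.exp v ^ j - (Complex.exp v ^ j)⁻¹) / (2 * Complex.I) := by
      rw [← Complex.exp_nat_mul, ← Complex.exp_neg, Complex.sin, hv]
      rw [show -((j:ℂ) * π * x) * Complex.I = -(j * (Complex.I * (π * x))) by ring,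
        show ((j:ℂ) * π * x) * Complex.I = (j * (Complex.I * (π * x))) by ring]
      field_simp
      rw [Complex.I_sq]; ring
    rw [e1]
    have hne := Complex.exp_ne_zero v
    have e2 : Complex.exp v ^ (N - j) = Complex.exp v ^ N * (Complex.exp v ^ j)⁻¹ := by
      rw [pow_sub₀ _ hne hj']
    rw [e2, pow_add]
    ring
  have hval : ∀ x ∈ A, ‖P.eval (Complex.exp (Complex.I * ((π * x : ℝ) : ℂ)))‖ ≤ M := by
    intro x hx
    rw [hev, norm_mul, norm_pow, Complex.norm_real]
    rw [show ‖Complex.exp (Complex.I * ((π * x : ℝ) : ℂ))‖ = 1 by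
      rw [mul_comm]; exact Complex.norm_exp_ofReal_mul_I _, one_pow, one_mul]
    exact hM x hx
  have hcoef : ∀ j ∈ Finset.Ioc 0 N, P.coeff (N + j) = (b j : ℂ) / (2 * Complex.I) := by
    intro j hj
    simp only [Finset.mem_Ioc] at hj
    rw [hPdef, Polynomial.finsetSum_coeff, Finset.sum_eq_single j]
    · rw [coeff_C_mul, coeff_sub, coeff_X_pow, coeff_X_pow, if_pos rfl, if_neg (by omega)]
      ring
    · intro k hk hkj
      rw [coeff_C_mul, coeff_sub, coeff_X_pow, coeff_X_pow, if_neg (by omega), if_neg (by omega)]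
      ring
    · intro h; simp at h; omega
  have hbd := obs_coeff_bound (2 * N) P hdeg m hm A hA hAm M hval
  have hbj : ∀ j ∈ Finset.Ioc 0 N, |b j| ≤ 2 * (((2 * N : ℕ) + 1) * (M * ((2 / m) ^ (2 * N) * exp ((2 * N : ℕ) + 1)))) := by
    intro j hj
    have h := hbd (N + j)
    rw [hcoef j hj] at h
    simp only [norm_div, norm_mul, Complex.norm_real, Complex.norm_I, Real.norm_eq_abs, Complex.norm_ofNat] at h
    linarith
  refine (Finset.sum_le_card_nsmul _ _ _ hbj).trans ?_
  rw [Nat.card_Ioc, Nat.sub_zero, nsmul_eq_mul]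
  have h1 : (2 / m) ^ (2 * N) ≤ exp (2 * N * |log (2 / m)|) := by
    have : (2 / m) = exp (log (2 / m)) := (Real.exp_log (by positivity)).symm
    conv_lhs => rw [this]
    rw [← Real.exp_nat_mul]
    apply Real.exp_le_exp.2
    push_cast
    gcongr
    exact le_abs_self _
  have h2 : (2 * N + 1 : ℝ) ≤ exp (2 * N) := Real.add_one_le_exp _
  have h3 : 2 * (N:ℝ) ≤ exp (2 * N) := by linarith
  push_cast
  calc (N:ℝ) * (2 * ((2 * N + 1) * (M * ((2 / m) ^ (2 * N) * exp (2 * N + 1)))))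
      = (2 * N) * (2 * N + 1) * ((2 / m) ^ (2 * N) * exp (2 * N + 1)) * M := by ring
    _ ≤ exp (2 * N) * exp (2 * N) * (exp (2 * N * |log (2 / m)|) * exp (2 * N + 1)) * M := by
        gcongr
    _ = exp (2 * N + 2 * N + (2 * N * |log (2 / m)| + (2 * N + 1))) * M := by
        simp only [Real.exp_add]
    _ ≤ _ := by
        gcongr
        have : 0 ≤ |log (2 / m)| := abs_nonneg _
        nlinarith

lemma obs_density (E : Set ℝ) (hE : MeasurableSet E) (hEpos : 0 < volume E) :
    ∃ L ∈ E, ∃ r > 0, ∀ ρ ∈ Set.Ioo (0:ℝ) r,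
      ρ / 8 ≤ volume.real (E ∩ Set.Ioo (L - ρ) (L - ρ + ρ / 4)) := by
  have h1 := Besicovitch.ae_tendsto_measure_inter_div (volume : Measure ℝ) E
  have h2 : ∀ᵐ x ∂(volume.restrict E), x ∈ E := ae_restrict_mem hE
  have hne : (volume.restrict E) ≠ 0 := by
    rw [Ne, Measure.restrict_eq_zero]; exact hEpos.ne'
  have : (ae (volume.restrict E)).NeBot := ae_neBot.2 hne
  obtain ⟨L, hL, hLE⟩ := (h1.and h2).exists
  refine ⟨L, hLE, ?_⟩
  have h3 := hL.eventually (lt_mem_nhds (show ENNReal.ofReal (15/16) < 1 by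
    rw [ENNReal.ofReal_lt_one]; norm_num))
  rw [eventually_nhdsWithin_iff, Metric.eventually_nhds_iff] at h3
  obtain ⟨r, hr, h3⟩ := h3
  refine ⟨r, hr, ?_⟩
  rintro ρ ⟨hρ0, hρr⟩
  have h4 := h3 (y := ρ) (by rw [Real.dist_eq, sub_zero, abs_of_pos hρ0]; exact hρr) hρ0
  rw [Real.volume_closedBall, ENNReal.lt_div_iff_mul_lt (by simp [hρ0]) (by simp),
    ← ENNReal.ofReal_mul (by norm_num)] at h4
  have hsub : E ∩ Metric.closedBall L ρ ⊆ (E ∩ Set.Ioo (L - ρ) (L - ρ + ρ / 4)) ∪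
      ({L - ρ} ∪ Set.Icc (L - ρ + ρ / 4) (L + ρ)) := by
    rintro x ⟨hx, hx2⟩
    rw [Real.closedBall_eq_Icc] at hx2
    rcases eq_or_lt_of_le hx2.1 with h | h
    · exact Or.inr (Or.inl h.symm)
    · by_cases h' : x < L - ρ + ρ / 4
      · exact Or.inl ⟨hx, h, h'⟩
      · exact Or.inr (Or.inr ⟨not_lt.1 h', hx2.2⟩)
  have h5 : volume (E ∩ Metric.closedBall L ρ) ≤ volume (E ∩ Set.Ioo (L - ρ) (L - ρ + ρ / 4)) +
      ENNReal.ofReal (7 * ρ / 4) := by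
    refine (measure_mono hsub).trans ((measure_union_le _ _).trans ?_)
    gcongr
    refine (measure_union_le _ _).trans ?_
    rw [Real.volume_singleton, zero_add, Real.volume_Icc]
    apply ENNReal.ofReal_le_ofReal; linarith
  have hfin : volume (E ∩ Set.Ioo (L - ρ) (L - ρ + ρ / 4)) ≠ ⊤ :=
    ((measure_mono Set.inter_subset_right).trans_lt (by rw [Real.volume_Ioo]; exact ENNReal.ofReal_lt_top)).ne
  have h6 := h4.trans_le h5
  rw [← ENNReal.ofReal_toReal hfin, ← ENNReal.ofReal_add ENNReal.toReal_nonneg (by positivity),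
    ENNReal.ofReal_lt_ofReal_iff_of_nonneg (by positivity)] at h6
  rw [measureReal_def]
  linarith

lemma obs_telescope (T : ℝ) (E : Set ℝ) (hE : MeasurableSet E) (hEsub : E ⊆ Set.Ioo 0 T)
    (hEpos : 0 < volume E) (K : ℝ) (hK : 0 < K) :
    ∃ C > 0, ∀ (A O : ℝ → ℝ), (∀ t, 0 ≤ A t) → MonotoneOn A (Set.Iio T) → IntegrableOn O E →
      (∀ t, 0 ≤ O t) → (∀ s s', s ∈ E → s < s' → s' < T → ∀ N : ℕ,
        A s ≤ exp (K * (N + 1)) * O s + exp (K * (N + 1) - π ^ 2 * N ^ 2 * (s' - s)) * A s') →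
      A 0 ≤ C * ∫ t in E, O t := by
  obtain ⟨L, hLE, r0, hr0, hden⟩ := obs_density E hE hEpos
  have hL := hEsub hLE
  set r := min r0 L / 2 with hr
  have hmin : 0 < min r0 L := lt_min hr0 hL.1
  have hrpos : 0 < r := by positivity
  have hrr0 : r < r0 := by have := min_le_left r0 L; linarith
  have hrL : r < L := by have := min_le_right r0 L; linarith
  obtain ⟨n0, hn0⟩ := exists_nat_ge (max 1 ((4 * K + 1) / r))
  have hn1 : (1:ℝ) ≤ n0 := (le_max_left _ _).trans hn0
  have hn2 : 4 * K + 1 ≤ n0 * r := by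
    have := (le_max_right _ _).trans hn0
    rwa [div_le_iff₀ hrpos] at this
  set β : ℝ := K * n0 + K + 1 with hβ
  have hβpos : 0 < β := by positivity
  have hkey : K * n0 + K + β ≤ π ^ 2 * n0 ^ 2 * r / 4 := by
    have hpi : 4 ≤ π ^ 2 := by nlinarith [Real.pi_gt_three]
    have e1 : K * n0 + K + β ≤ (4 * K + 1) * n0 := by rw [hβ]; nlinarith
    have e2 : (4 * K + 1) * n0 ≤ (n0 * r) * n0 := by gcongr
    have e3 : 4 * (n0 ^ 2 * r) ≤ π ^ 2 * (n0 ^ 2 * r) := by gcongr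
    nlinarith
  refine ⟨8 / r * exp β, by positivity, ?_⟩
  intro A O hA0 hAm hOint hO0 hest
  set ρ : ℕ → ℝ := fun m => r / 2 ^ m with hρ
  set l : ℕ → ℝ := fun m => L - ρ m with hl
  have hρpos : ∀ m, 0 < ρ m := fun m => by positivity
  have hρle : ∀ m, ρ m ≤ r := fun m => div_le_self hrpos.le (one_le_pow₀ (by norm_num))
  have hρs : ∀ m, ρ (m+1) = ρ m / 2 := fun m => by simp only [hρ]; rw [pow_succ]; field_simp
  have hlT : ∀ m, l m < T := fun m => by simp only [hl]; linarith [hρpos m, hL.2]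
  have hOs : ∀ S ⊆ E, IntegrableOn O S := fun S hS => hOint.mono_set hS
  have step : ∀ m : ℕ, exp (-β * 2 ^ m) * A (l m) ≤
      8 / r * (∫ t in E ∩ Set.Ioo (l m) (l m + ρ m / 4), O t) + exp (-β * 2 ^ (m+1)) * A (l (m+1)) := by
    intro m
    set J := E ∩ Set.Ioo (l m) (l m + ρ m / 4) with hJ
    have hJm : MeasurableSet J := hE.inter measurableSet_Ioo
    have hJfin : volume J ≠ ⊤ :=
      ((measure_mono Set.inter_subset_right).trans_lt (by rw [Real.volume_Ioo]; exact ENNReal.ofReal_lt_top)).ne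
    have hJv : ρ m / 8 ≤ volume.real J := hden (ρ m) ⟨hρpos m, (hρle m).trans_lt hrr0⟩
    set N : ℕ := n0 * 2 ^ m with hN
    set e := exp (K * (N + 1)) with he
    set e' := exp (K * (N + 1) - π ^ 2 * N ^ 2 * (ρ m / 4)) with he'
    have hpt : ∀ s ∈ J, A (l m) - e' * A (l (m+1)) ≤ e * O s := by
      rintro s ⟨hsE, hs1, hs2⟩
      have hl1 : l (m+1) - s ≥ ρ m / 4 := by
        simp only [hl] at hs2 ⊢; rw [hρs]; linarith
      have h1 := hest s (l (m+1)) hsE (by linarith [hρpos m]) (hlT _) N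
      have h2 : A (l m) ≤ A s := hAm (hlT m) (hEsub hsE).2 hs1.le
      have h3 : exp (K * (N + 1) - π ^ 2 * N ^ 2 * (l (m+1) - s)) * A (l (m+1)) ≤ e' * A (l (m+1)) := by
        apply mul_le_mul_of_nonneg_right _ (hA0 _)
        apply Real.exp_le_exp.2
        gcongr
      linarith
    have hintg : (A (l m) - e' * A (l (m+1))) * volume.real J ≤ e * ∫ t in J, O t := by
      have := setIntegral_mono_on (μ := volume) (s := J) (f := fun _ => A (l m) - e' * A (l (m+1)))
        (g := fun s => e * O s) (integrableOn_const hJfin) ((hOs J Set.inter_subset_left).const_mul e) hJm hpt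
      rw [setIntegral_const, integral_const_mul, smul_eq_mul] at this
      linarith
    have hI0 : 0 ≤ ∫ t in J, O t := setIntegral_nonneg hJm fun t _ => hO0 t
    have hintg2 : (A (l m) - e' * A (l (m+1))) * (ρ m / 8) ≤ e * ∫ t in J, O t := by
      rcases le_total 0 (A (l m) - e' * A (l (m+1))) with h | h
      · exact (mul_le_mul_of_nonneg_left hJv h).trans hintg
      · have : 0 ≤ e * ∫ t in J, O t := mul_nonneg (Real.exp_pos _).le hI0
        nlinarith [hρpos m]
    have h2m : (1:ℝ) ≤ 2 ^ m := one_le_pow₀ (by norm_num)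
    have hw1 : exp (-β * 2 ^ m) * e' ≤ exp (-β * 2 ^ (m+1)) := by
      rw [he', ← Real.exp_add]
      apply Real.exp_le_exp.2
      have : π ^ 2 * (N:ℝ) ^ 2 * (ρ m / 4) = (π ^ 2 * n0 ^ 2 * r / 4) * 2 ^ m := by
        simp only [hN, hρ]; push_cast; field_simp
      rw [this, hN]
      push_cast
      have h7 := mul_le_mul_of_nonneg_right hkey (show (0:ℝ) ≤ 2 ^ m by positivity)
      rw [pow_succ (2:ℝ) m]
      have h72 := mul_le_mul_of_nonneg_left h2m hK.le
      nlinarith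
    have hw2 : exp (-β * 2 ^ m) * e * (2 ^ m) ≤ 1 := by
      rw [he, ← Real.exp_add]
      have h8 : -β * 2 ^ m + K * (N + 1) ≤ - 2 ^ m := by
        rw [hN, hβ]; push_cast
        nlinarith
      have h9 : (2:ℝ) ^ m ≤ exp (2 ^ m) := by linarith [Real.add_one_le_exp ((2:ℝ)^m)]
      calc _ ≤ exp (- 2 ^ m) * exp (2 ^ m) := by gcongr
        _ = 1 := by rw [← Real.exp_add]; simp
    have hD : A (l m) - e' * A (l (m+1)) ≤ 8 / r * 2 ^ m * (e * ∫ t in J, O t) := by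
      have : ρ m / 8 = (8 / r * 2 ^ m)⁻¹ := by simp only [hρ]; field_simp
      rw [this, mul_inv_le_iff₀ (by positivity)] at hintg2
      linarith
    have hfin := mul_le_mul_of_nonneg_left hD (Real.exp_pos (-β * 2 ^ m)).le
    have h10 : exp (-β * 2 ^ m) * (8 / r * 2 ^ m * (e * ∫ t in J, O t)) ≤ 8 / r * ∫ t in J, O t := by
      calc _ = (exp (-β * 2 ^ m) * e * (2 ^ m)) * (8 / r * ∫ t in J, O t) := by ring
        _ ≤ 1 * (8 / r * ∫ t in J, O t) := by gcongr
        _ = _ := one_mul _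
    have h11 := mul_le_mul_of_nonneg_right hw1 (hA0 (l (m+1)))
    nlinarith
  have tele : ∀ M : ℕ, exp (-β) * A (l 0) ≤
      8 / r * (∫ t in E ∩ Set.Iio (l M), O t) + exp (-β * 2 ^ M) * A (l M) := by
    intro M
    induction M with
    | zero =>
      have : 0 ≤ ∫ t in E ∩ Set.Iio (l 0), O t :=
        setIntegral_nonneg (hE.inter measurableSet_Iio) fun t _ => hO0 t
      have : 0 ≤ 8 / r * ∫ t in E ∩ Set.Iio (l 0), O t := by positivity
      simp only [pow_zero, mul_one]
      linarith
    | succ M ih =>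
      have h1 := step M
      have h2 : (∫ t in E ∩ Set.Iio (l M), O t) + (∫ t in E ∩ Set.Ioo (l M) (l M + ρ M / 4), O t) ≤
          ∫ t in E ∩ Set.Iio (l (M+1)), O t := by
        rw [← setIntegral_union _ (hE.inter measurableSet_Ioo) (hOs _ Set.inter_subset_left) (hOs _ Set.inter_subset_left)]
        · apply setIntegral_mono_set (hOs _ Set.inter_subset_left)
          · exact Filter.Eventually.of_forall fun t => hO0 t
          · apply LE.le.eventuallyLE
            have hlm : l (M+1) = l M + ρ M / 2 := by simp only [hl]; rw [hρs]; ring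
            rintro x (⟨hx, hx2⟩ | ⟨hx, hx2⟩)
            · refine ⟨hx, ?_⟩
              simp only [Set.mem_Iio] at hx2 ⊢
              linarith [hρpos M]
            · refine ⟨hx, ?_⟩
              simp only [Set.mem_Iio, Set.mem_Ioo] at hx2 ⊢
              linarith [hρpos M, hx2.2]
        · rw [Set.disjoint_left]
          rintro x ⟨_, hx⟩ ⟨_, hx2⟩
          exact lt_asymm hx hx2.1
      have h3 := mul_le_mul_of_nonneg_left h2 (show 0 ≤ 8 / r by positivity)
      linarith
  have hfinal : exp (-β) * A (l 0) ≤ 8 / r * (∫ t in E, O t) + 0 * A L := by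
    have hlim : Filter.Tendsto (fun M : ℕ => 8 / r * (∫ t in E, O t) + exp (-β * 2 ^ M) * A L)
        Filter.atTop (nhds (8 / r * (∫ t in E, O t) + 0 * A L)) := by
      apply Filter.Tendsto.const_add
      apply Filter.Tendsto.mul_const
      apply Real.tendsto_exp_atBot.comp
      have : Filter.Tendsto (fun M : ℕ => (2:ℝ) ^ M) Filter.atTop Filter.atTop :=
        tendsto_pow_atTop_atTop_of_one_lt (by norm_num)
      exact this.const_mul_atTop_of_neg (by linarith)
    refine ge_of_tendsto' hlim fun M => (tele M).trans ?_
    have h1 : (∫ t in E ∩ Set.Iio (l M), O t) ≤ ∫ t in E, O t :=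
      setIntegral_mono_set hOint (Filter.Eventually.of_forall fun t => hO0 t)
        Set.inter_subset_left.eventuallyLE
    have h2 : A (l M) ≤ A L := hAm (hlT M) hL.2 (by simp only [hl]; linarith [hρpos M])
    gcongr
  have hA0l : A 0 ≤ A (l 0) := hAm (show (0:ℝ) < T by linarith [hL.1, hL.2]) (hlT 0)
    (by simp only [hl, hρ, pow_zero, div_one]; linarith)
  rw [zero_mul, add_zero] at hfinal
  calc A 0 ≤ A (l 0) := hA0l
    _ = exp β * (exp (-β) * A (l 0)) := by rw [← mul_assoc, ← Real.exp_add]; simp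
    _ ≤ exp β * (8 / r * (∫ t in E, O t)) := by gcongr
    _ = _ := by ring

lemma obs_cont (b : ℕ → ℝ) (hb : Summable fun j => |b j|) :
    Continuous fun x : ℝ => ∑' j : ℕ, b j * sin (j * π * x) := by
  refine continuous_tsum (fun j => by fun_prop) hb fun j x => ?_
  rw [Real.norm_eq_abs, abs_mul]
  exact mul_le_of_le_one_right (abs_nonneg _) (Real.abs_sin_le_one _)

lemma obs_summable_sin (b : ℕ → ℝ) (hb : Summable fun j => |b j|) (x : ℝ) :
    Summable fun j : ℕ => |b j * sin (j * π * x)| := by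
  refine Summable.of_nonneg_of_le (fun j => abs_nonneg _) (fun j => ?_) hb
  rw [abs_mul]
  exact mul_le_of_le_one_right (abs_nonneg _) (Real.abs_sin_le_one _)

lemma obs_tail_le (b : ℕ → ℝ) (hb : Summable fun j => |b j|) (x : ℝ) (M : ℕ) :
    |∑' j : ℕ, b (j + M) * sin (((j + M : ℕ) : ℝ) * π * x)| ≤ ∑' j, |b (j + M)| := by
  have h1 := (summable_nat_add_iff M).2 (obs_summable_sin b hb x)
  refine (norm_tsum_le_tsum_norm (f := fun j : ℕ => b (j + M) * sin (((j + M : ℕ) : ℝ) * π * x)) h1).trans ?_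
  simp only [Real.norm_eq_abs]
  refine Summable.tsum_le_tsum (fun j => ?_) h1 ((summable_nat_add_iff M).2 hb)
  rw [abs_mul]
  exact mul_le_of_le_one_right (abs_nonneg _) (Real.abs_sin_le_one _)

lemma obs_intOn (b : ℕ → ℝ) (hb : Summable fun j => |b j|) (G : Set ℝ) (hG : G ⊆ Set.Ioo 0 1) :
    IntegrableOn (fun x : ℝ => (∑' j : ℕ, b j * sin (j * π * x)) ^ 2) G :=
  (((obs_cont b hb).pow 2).integrableOn_Icc (a := 0) (b := 1)).mono_set
    (hG.trans Set.Ioo_subset_Icc_self)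

lemma obs_upper (b : ℕ → ℝ) (hb : Summable fun j => |b j|) (G : Set ℝ) (hGm : MeasurableSet G)
    (hG : G ⊆ Set.Ioo 0 1) :
    (∫ x in G, (∑' j : ℕ, b j * sin (j * π * x)) ^ 2) ^ ((1:ℝ)/2) ≤ ∑' j, |b j| := by
  have hA : 0 ≤ ∑' j, |b j| := tsum_nonneg fun j => abs_nonneg _
  have hv : volume G ≤ 1 := (measure_mono hG).trans (by simp)
  have hfin : volume G ≠ ⊤ := (hv.trans_lt (by simp)).ne
  have h1 : (∫ x in G, (∑' j : ℕ, b j * sin (j * π * x)) ^ 2) ≤ ∫ x in G, (∑' j, |b j|) ^ 2 := by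
    refine setIntegral_mono_on (obs_intOn b hb G hG) (integrableOn_const hfin) hGm fun x _ => ?_
    have := obs_tail_le b hb x 0
    simp only [add_zero] at this
    exact sq_le_sq' (abs_le.1 this).1 (abs_le.1 this).2
  have h2 : (∫ x in G, (∑' j, |b j|) ^ 2) ≤ (∑' j, |b j|) ^ 2 := by
    rw [setIntegral_const, smul_eq_mul]
    apply mul_le_of_le_one_left (by positivity)
    exact ENNReal.toReal_le_of_le_ofReal (by norm_num) (by simpa using hv)
  rw [← Real.sqrt_eq_rpow]
  exact Real.sqrt_le_iff.2 ⟨hA, h1.trans h2⟩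

lemma obs_low (G : Set ℝ) (hGm : MeasurableSet G)
    (hG : G ⊆ Set.Ioo 0 1) (hGpos : 0 < volume G) :
    ∃ K > 0, ∀ (b : ℕ → ℝ), b 0 = 0 → Summable (fun j => |b j|) → ∀ N : ℕ,
      ∑' j, |b j| ≤
        exp (K * (N + 1)) * (∫ x in G, (∑' j : ℕ, b j * sin (j * π * x)) ^ 2) ^ ((1:ℝ)/2)
        + exp (K * (N + 1)) * ∑' j, |b (j + (N + 1))| := by
  have hv : volume G ≤ 1 := (measure_mono hG).trans (by simp)
  have hfin : volume G ≠ ⊤ := (hv.trans_lt (by simp)).ne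
  set μ := volume.real G with hμ
  have hμpos : 0 < μ := ENNReal.toReal_pos hGpos.ne' hfin
  obtain ⟨K0, hK0, hsp⟩ := obs_spectral (μ / 2) (by positivity)
  set c := √(2 / μ) with hc
  have hcpos : 0 < c := by positivity
  refine ⟨K0 + 1 + c, by positivity, ?_⟩
  intro b hb0 hb N
  set Ob := (∫ x in G, (∑' j : ℕ, b j * sin (j * π * x)) ^ 2) ^ ((1:ℝ)/2) with hOb
  set hi := ∑' j, |b (j + (N + 1))| with hhi
  have hhi0 : 0 ≤ hi := tsum_nonneg fun j => abs_nonneg _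
  have hI0 : 0 ≤ ∫ x in G, (∑' j : ℕ, b j * sin (j * π * x)) ^ 2 :=
    setIntegral_nonneg hGm fun x _ => sq_nonneg _
  have hOb0 : 0 ≤ Ob := Real.rpow_nonneg hI0 _
  have hObsq : ∫ x in G, (∑' j : ℕ, b j * sin (j * π * x)) ^ 2 = Ob ^ 2 := by
    rw [hOb, ← Real.sqrt_eq_rpow, Real.sq_sqrt hI0]
  have hsplit : ∑' j, |b j| = ∑ j ∈ Finset.Ioc 0 N, |b j| + hi := by
    rw [← hb.sum_add_tsum_nat_add (N+1), hhi]
    congr 1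
    rw [Finset.sum_range_succ', hb0, abs_zero, add_zero]
    rw [Finset.range_eq_Ico, Finset.sum_Ico_add' (fun j => |b j|) 0 N 1]
    rfl
  have hmain : ∀ y, Ob < y → ∑' j, |b j| ≤ exp (K0 * (N + 1)) * (c * y + hi) + hi := by
    intro y hy
    have hy0 : 0 < y := hOb0.trans_lt hy
    set ε := (c * y) ^ 2 with hε
    have hεeq : ε = 2 / μ * y ^ 2 := by
      rw [hε, mul_pow, hc, Real.sq_sqrt (by positivity)]
    have hεpos : 0 < ε := by positivity
    have hch := mul_meas_ge_le_integral_of_nonneg (μ := volume.restrict G)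
      (f := fun x : ℝ => (∑' j : ℕ, b j * sin (j * π * x)) ^ 2)
      (Filter.Eventually.of_forall fun x => sq_nonneg _) (obs_intOn b hb G hG) ε
    rw [hObsq] at hch
    have hzc := obs_cont b hb
    have hBm : MeasurableSet {x : ℝ | ε ≤ (∑' j : ℕ, b j * sin (j * π * x)) ^ 2} :=
      (isClosed_le continuous_const (hzc.pow 2)).measurableSet
    rw [measureReal_restrict_apply hBm] at hch
    set B := {x : ℝ | ε ≤ (∑' j : ℕ, b j * sin (j * π * x)) ^ 2} with hB
    have hBv : volume.real (B ∩ G) ≤ μ / 2 := by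
      have : ε * volume.real (B ∩ G) ≤ ε * (μ / 2) := by
        refine hch.trans ?_
        rw [hεeq]
        have : 2 / μ * y ^ 2 * (μ / 2) = y ^ 2 := by field_simp
        rw [this]
        exact pow_le_pow_left₀ hOb0 hy.le 2
      exact le_of_mul_le_mul_left this hεpos
    have hA' : ENNReal.ofReal (μ / 2) ≤ volume (G \ B) := by
      apply ENNReal.ofReal_le_of_le_toReal
      have := measureReal_inter_add_sdiff (μ := volume) (s := G) hBm hfin
      rw [Set.inter_comm] at this
      change μ / 2 ≤ volume.real (G \ B)
      linarith
    have := hsp N b (G \ B) (Set.sdiff_subset.trans hG) hA' (c * y + hi) (by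
      rintro x ⟨hxG, hxB⟩
      have hxB' : (∑' j : ℕ, b j * sin (j * π * x)) ^ 2 < (c * y) ^ 2 := not_le.1 hxB
      have h1 := abs_lt_of_sq_lt_sq hxB' (by positivity)
      have h2 := ((obs_summable_sin b hb x).of_abs).sum_add_tsum_nat_add (N+1)
      have h3 := obs_tail_le b hb x (N+1)
      rw [eq_sub_of_add_eq h2]
      exact (abs_sub _ _).trans (add_le_add h1.le h3))
    rw [hsplit]
    linarith
  have hlim : ∑' j, |b j| ≤ exp (K0 * (N + 1)) * (c * Ob + hi) + hi := by
    have hcont : Filter.Tendsto (fun y => exp (K0 * (N + 1)) * (c * y + hi) + hi) (nhdsWithin Ob (Set.Ioi Ob))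
        (nhds (exp (K0 * (N + 1)) * (c * Ob + hi) + hi)) := by
      apply tendsto_nhdsWithin_of_tendsto_nhds
      exact Continuous.tendsto (by fun_prop) Ob
    refine ge_of_tendsto hcont ?_
    filter_upwards [self_mem_nhdsWithin] with y hy using hmain y hy
  have hN : (0:ℝ) ≤ N := Nat.cast_nonneg N
  have e1 : exp (K0 * (N + 1)) * c ≤ exp ((K0 + 1 + c) * (N + 1)) := by
    have : c ≤ exp ((1 + c) * (N + 1)) := by
      have := Real.add_one_le_exp ((1 + c) * (N + 1))
      nlinarith [mul_nonneg hcpos.le hN]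
    calc _ ≤ exp (K0 * (N + 1)) * exp ((1 + c) * (N + 1)) := by gcongr
      _ = _ := by rw [← Real.exp_add]; ring_nf
  have e2 : exp (K0 * (N + 1)) + 1 ≤ exp ((K0 + 1 + c) * (N + 1)) := by
    have h2 : 2 ≤ exp ((1 + c) * (N + 1)) := by
      have := Real.add_one_le_exp ((1 + c) * (N + 1))
      nlinarith [mul_nonneg hcpos.le hN]
    have h3 : 1 ≤ exp (K0 * (N + 1)) := Real.one_le_exp (by positivity)
    calc _ ≤ exp (K0 * (N + 1)) * 2 := by linarith
      _ ≤ exp (K0 * (N + 1)) * exp ((1 + c) * (N + 1)) := by gcongr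
      _ = _ := by rw [← Real.exp_add]; ring_nf
  calc _ ≤ (exp (K0 * (N + 1)) * c) * Ob + (exp (K0 * (N + 1)) + 1) * hi := by linarith
    _ ≤ _ := by gcongr

lemma obs_exp_le (j : ℕ) (τ : ℝ) (hτ : 0 < τ) (hj : j ≠ 0) :
    exp (-(j:ℝ) ^ 2 * π ^ 2 * τ) ≤ (√τ)⁻¹ * (j:ℝ)⁻¹ := by
  have hj' : (0:ℝ) < j := by exact_mod_cast Nat.pos_of_ne_zero hj
  have hs : 0 < √τ := Real.sqrt_pos.2 hτ
  rw [← mul_inv, show -(j:ℝ) ^ 2 * π ^ 2 * τ = -((j:ℝ) ^ 2 * π ^ 2 * τ) by ring, Real.exp_neg]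
  apply inv_anti₀ (by positivity)
  have h1 := Real.add_one_le_exp ((j:ℝ) ^ 2 * π ^ 2 * τ)
  have h2 : √τ ^ 2 = τ := Real.sq_sqrt hτ.le
  have h3 : 1 ≤ π ^ 2 := by nlinarith [Real.pi_gt_three]
  have h4 : (j:ℝ) ^ 2 * τ ≤ (j:ℝ) ^ 2 * π ^ 2 * τ := by
    have : 0 ≤ (j:ℝ) ^ 2 * τ := by positivity
    nlinarith
  have h5 : (√τ * j) ^ 2 = (j:ℝ) ^ 2 * τ := by rw [mul_pow, h2]; ring
  nlinarith [sq_nonneg (√τ * j - 1)]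

set_option maxHeartbeats 800000 in
lemma obs_main (G : Set ℝ) (hG : MeasurableSet G) (hGsub : G ⊆ Set.Ioo 0 1)
    (hGpos : 0 < volume G)
    (T : ℝ) (hT : 0 < T)
    (E : Set ℝ) (hE : MeasurableSet E) (hEsub : E ⊆ Set.Ioo 0 T) (hEpos : 0 < volume E) :
    ∃ C > 0, ∀ a : ℕ → ℝ, a 0 = 0 → Summable (fun j => a j ^ 2) →
      (∫ x in Set.Ioo (0:ℝ) 1,
          (∑' j : ℕ, a j * Real.exp (-(j : ℝ) ^ 2 * π ^ 2 * (T - 0)) * Real.sin (j * π * x)) ^ 2) ^ ((1:ℝ)/2) ≤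
        C * ∫ t in E,
          (∫ x in G,
            (∑' j : ℕ, a j * Real.exp (-(j : ℝ) ^ 2 * π ^ 2 * (T - t)) * Real.sin (j * π * x)) ^ 2) ^ ((1:ℝ)/2) := by
  obtain ⟨K, hK, hlow⟩ := obs_low G hG hGsub hGpos
  obtain ⟨C, hC, htel⟩ := obs_telescope T E hE hEsub hEpos K hK
  refine ⟨C, hC, ?_⟩
  intro a ha0 ha
  set b : ℝ → ℕ → ℝ := fun t j => a j * Real.exp (-(j : ℝ) ^ 2 * π ^ 2 * (T - t)) with hb
  have hb0 : ∀ t, b t 0 = 0 := fun t => by simp [hb, ha0]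
  have hS : Summable fun j : ℕ => |a j| * (j:ℝ)⁻¹ := by
    have h1 : Summable fun j : ℕ => a j ^ 2 + ((j:ℝ) ^ 2)⁻¹ :=
      ha.add (Real.summable_nat_pow_inv.2 (by norm_num))
    refine Summable.of_nonneg_of_le (fun j => by positivity) (fun j => ?_) h1
    have h2 : 0 ≤ |a j| * (j:ℝ)⁻¹ := by positivity
    rw [← inv_pow, ← sq_abs (a j)]
    nlinarith [sq_nonneg (|a j| - (j:ℝ)⁻¹)]
  have hble : ∀ t < T, ∀ j, |b t j| ≤ (√(T - t))⁻¹ * (|a j| * (j:ℝ)⁻¹) := by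
    intro t ht j
    by_cases hj : j = 0
    · subst hj; simp [hb0]
    · simp only [hb]
      rw [abs_mul, abs_of_pos (Real.exp_pos _)]
      have := mul_le_mul_of_nonneg_left (obs_exp_le j (T - t) (by linarith) hj) (abs_nonneg (a j))
      linarith
  have hbs : ∀ t < T, Summable fun j => |b t j| := fun t ht =>
    Summable.of_nonneg_of_le (fun j => abs_nonneg _) (hble t ht) (hS.mul_left _)
  have hbrel : ∀ s s' j, |b s j| = |b s' j| * exp (-(π ^ 2 * (j:ℝ) ^ 2 * (s' - s))) := by
    intro s s' j
    simp only [hb]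
    rw [abs_mul, abs_mul, abs_of_pos (Real.exp_pos _), abs_of_pos (Real.exp_pos _), mul_assoc |a j|,
      ← Real.exp_add]
    congr 2
    ring
  have hOm : Measurable fun t => (∫ x in G, (∑' j : ℕ, b t j * Real.sin (j * π * x)) ^ 2) ^ ((1:ℝ)/2) := by
    have h1 : Measurable fun q : ℝ × ℝ => (∑' j : ℕ, b q.1 j * Real.sin (j * π * q.2)) ^ 2 := by
      apply Measurable.pow_const
      apply Measurable.tsum
      intro j
      simp only [hb]
      fun_prop
    exact (h1.stronglyMeasurable.integral_prod_right' (ν := volume.restrict G)).measurable.pow_const _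
  have hO0 : ∀ t, 0 ≤ (∫ x in G, (∑' j : ℕ, b t j * Real.sin (j * π * x)) ^ 2) ^ ((1:ℝ)/2) := fun t =>
    Real.rpow_nonneg (setIntegral_nonneg hG fun x _ => sq_nonneg _) _
  have hOint : IntegrableOn
      (fun t => (∫ x in G, (∑' j : ℕ, b t j * Real.sin (j * π * x)) ^ 2) ^ ((1:ℝ)/2)) E := by
    have hdom : IntegrableOn (fun t => (T - t) ^ (-(1/2):ℝ) * ∑' j : ℕ, |a j| * (j:ℝ)⁻¹) E := by
      have h1 : IntervalIntegrable (fun x : ℝ => x ^ (-(1/2):ℝ)) volume 0 T :=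
        intervalIntegral.intervalIntegrable_rpow' (by norm_num)
      have h2 := (h1.comp_sub_left T).symm
      simp only [sub_zero, sub_self] at h2
      rw [intervalIntegrable_iff_integrableOn_Ioo_of_le hT.le] at h2
      exact (h2.mono_set hEsub).mul_const _
    refine Integrable.mono' hdom hOm.aestronglyMeasurable ?_
    filter_upwards [ae_restrict_mem hE] with t ht
    have htT := (hEsub ht).2
    rw [Real.norm_eq_abs, abs_of_nonneg (hO0 t)]
    refine (obs_upper (b t) (hbs t htT) G hG hGsub).trans ?_
    rw [Real.rpow_neg (by linarith), ← Real.sqrt_eq_rpow, ← tsum_mul_left]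
    exact Summable.tsum_le_tsum (hble t htT) (hbs t htT) (hS.mul_left _)
  have hfin := htel (fun t => ∑' j, |b t j|) _ (fun t => tsum_nonneg fun j => abs_nonneg _)
    (by
      intro s hs s' hs' hss
      refine Summable.tsum_le_tsum (fun j => ?_) (hbs s hs) (hbs s' hs')
      rw [hbrel s s' j]
      apply mul_le_of_le_one_right (abs_nonneg _)
      apply Real.exp_le_one_iff.2
      have : 0 ≤ s' - s := by linarith
      have : 0 ≤ π ^ 2 * (j:ℝ) ^ 2 * (s' - s) := by positivity
      linarith)
    hOint hO0
    (by
      intro s s' hs hss hs' N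
      have hsT := (hEsub hs).2
      refine (hlow (b s) (hb0 s) (hbs s hsT) N).trans ?_
      refine add_le_add le_rfl ?_
      rw [sub_eq_add_neg, Real.exp_add, mul_assoc]
      refine mul_le_mul_of_nonneg_left ?_ (Real.exp_pos _).le
      have h1 : ∑' j, |b s (j + (N+1))| ≤ ∑' j, exp (-(π ^ 2 * (N:ℝ) ^ 2 * (s' - s))) * |b s' (j + (N+1))| := by
        refine Summable.tsum_le_tsum (fun j => ?_) ((summable_nat_add_iff (N+1)).2 (hbs s hsT))
          (((summable_nat_add_iff (N+1)).2 (hbs s' hs')).mul_left _)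
        rw [hbrel s s', mul_comm]
        refine mul_le_mul_of_nonneg_right ?_ (abs_nonneg _)
        apply Real.exp_le_exp.2
        have h2 : 0 ≤ s' - s := by linarith
        have h3 : (N:ℝ) ≤ ((j + (N+1) : ℕ) : ℝ) := Nat.cast_le.2 (by omega)
        gcongr
      rw [tsum_mul_left] at h1
      refine h1.trans (mul_le_mul_of_nonneg_left ?_ (Real.exp_pos _).le)
      rw [← (hbs s' hs').sum_add_tsum_nat_add (N+1)]
      exact le_add_of_nonneg_left (Finset.sum_nonneg fun j _ => abs_nonneg _))
  exact (obs_upper (b 0) (hbs 0 hT) _ measurableSet_Ioo le_rfl).trans hfin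

theorem stmt_13 (x₀ R : ℝ) (hx₀ : x₀ ∈ Set.Ioo (0:ℝ) 1) (hR : R ∈ Set.Ioc (0:ℝ) 1)
    (hball : Set.Ioo (x₀ - 4 * R) (x₀ + 4 * R) ⊆ Set.Ioo (0:ℝ) 1)
    (G : Set ℝ) (hG : MeasurableSet G) (hGsub : G ⊆ Set.Ioo (x₀ - R) (x₀ + R))
    (hGpos : 0 < volume G)
    (T : ℝ) (hT : 0 < T)
    (E : Set ℝ) (hE : MeasurableSet E) (hEsub : E ⊆ Set.Ioo 0 T) (hEpos : 0 < volume E) :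
    ∃ C > 0, ∀ a : ℕ → ℝ, Summable (fun j => a j ^ 2) →
      (∫ x in Set.Ioo (0:ℝ) 1,
          (∑' j : ℕ, if 1 ≤ j
            then a j * Real.exp (-(j : ℝ) ^ 2 * π ^ 2 * (T - 0)) * Real.sin (j * π * x)
            else 0) ^ 2) ^ ((1:ℝ)/2) ≤
        C * ∫ t in E,
          (∫ x in G,
            (∑' j : ℕ, if 1 ≤ j
              then a j * Real.exp (-(j : ℝ) ^ 2 * π ^ 2 * (T - t)) * Real.sin (j * π * x)
              else 0) ^ 2) ^ ((1:ℝ)/2) := by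
  have hG01 : G ⊆ Set.Ioo 0 1 := by
    refine hGsub.trans (Set.Subset.trans ?_ hball)
    have := hR.1
    exact Set.Ioo_subset_Ioo (by linarith) (by linarith)
  obtain ⟨C, hC, h⟩ := obs_main G hG hG01 hGpos T hT E hE hEsub hEpos
  refine ⟨C, hC, fun a ha => ?_⟩
  have h1 := h (fun j => if 1 ≤ j then a j else 0) (by simp)
    (by
      refine Summable.of_nonneg_of_le (fun j => sq_nonneg _) (fun j => ?_) ha
      split_ifs
      · exact le_rfl
      · simpa using sq_nonneg (a j))
  simpa only [ite_mul, zero_mul] using h1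
end
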